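/- arXiv:math/0406455 — 12 statements merged into one kernel-verified Lean document; each statement's English description precedes it below -/
import Mathlib

section
/- Let u be a k-dimensional random vector with the multivariate normal distribution N(0, Σ), where Σ is a k×k positive definite real matrix, and let A₁ and A₂ be k×k symmetric real matrices. Then E[u (u′A₁u − E[u′A₁u])(u′A₂u − E[u′A₂u]) u′] = 2 tr(A₁ Σ A₂ Σ) Σ + 4 Σ A₁ Σ A₂ Σ + 4 Σ A₂ Σ A₁ Σ (an identity of k×k matrices, the expectation taken entrywise). -/
open MeasureTheory Matrix Real

/-- The multivariate normal distribution `N(0, S)` on `ℝ^k`, defined through its density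
with respect to Lebesgue measure. -/
noncomputable def mvGaussian (k : ℕ) (S : Matrix (Fin k) (Fin k) ℝ) :
    Measure (Fin k → ℝ) :=
  volume.withDensity fun x =>
    ENNReal.ofReal ((2 * Real.pi) ^ (-(k : ℝ) / 2) * S.det ^ (-(1 : ℝ) / 2) *
      Real.exp (-(x ⬝ᵥ (S⁻¹ *ᵥ x)) / 2))


namespace QF

def Good {k : ℕ} (f : (Fin k → ℝ) → ℝ) : Prop :=
  Continuous f ∧ ∀ ε : ℝ, 0 < ε → ∃ K : ℝ, ∀ x, |f x| ≤ K * Real.exp (ε * (x ⬝ᵥ x))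

lemma dot_self_nonneg' {k : ℕ} (x : Fin k → ℝ) : 0 ≤ x ⬝ᵥ x :=
  Finset.sum_nonneg fun i _ => mul_self_nonneg (x i)

lemma Good.mul {k : ℕ} {f g : (Fin k → ℝ) → ℝ} (hf : Good f) (hg : Good g) :
    Good (fun x => f x * g x) := by
  refine ⟨hf.1.mul hg.1, fun ε hε => ?_⟩
  obtain ⟨K, hK⟩ := hf.2 (ε / 2) (by positivity)
  obtain ⟨L, hL⟩ := hg.2 (ε / 2) (by positivity)
  refine ⟨K * L, fun x => ?_⟩
  have h : Real.exp (ε * (x ⬝ᵥ x)) =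
      Real.exp (ε / 2 * (x ⬝ᵥ x)) * Real.exp (ε / 2 * (x ⬝ᵥ x)) := by
    rw [← Real.exp_add]; ring_nf
  rw [abs_mul, h]
  calc |f x| * |g x| ≤ (K * Real.exp (ε / 2 * (x ⬝ᵥ x))) * (L * Real.exp (ε / 2 * (x ⬝ᵥ x))) :=
        mul_le_mul (hK x) (hL x) (abs_nonneg _) ((abs_nonneg _).trans (hK x))
    _ = _ := by ring

lemma Good.add {k : ℕ} {f g : (Fin k → ℝ) → ℝ} (hf : Good f) (hg : Good g) :
    Good (fun x => f x + g x) := by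
  refine ⟨hf.1.add hg.1, fun ε hε => ?_⟩
  obtain ⟨K, hK⟩ := hf.2 ε hε
  obtain ⟨L, hL⟩ := hg.2 ε hε
  refine ⟨K + L, fun x => ?_⟩
  have := abs_add_le (f x) (g x)
  have := hK x
  have := hL x
  linarith

lemma Good.const {k : ℕ} (c : ℝ) : Good (fun _ : Fin k → ℝ => c) := by
  refine ⟨continuous_const, fun ε hε => ⟨|c|, fun x => ?_⟩⟩
  have : 1 ≤ Real.exp (ε * (x ⬝ᵥ x)) :=
    Real.one_le_exp (mul_nonneg hε.le (dot_self_nonneg' x))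
  nlinarith [abs_nonneg c]

lemma Good.coord {k : ℕ} (i : Fin k) : Good (fun x : Fin k → ℝ => x i) := by
  refine ⟨continuous_apply i, fun ε hε => ⟨1 + 1 / ε, fun x => ?_⟩⟩
  have h1 : x i * x i ≤ x ⬝ᵥ x :=
    Finset.single_le_sum (f := fun i => x i * x i) (fun i _ => mul_self_nonneg (x i))
      (Finset.mem_univ i)
  have h2 : |x i| ≤ 1 + x ⬝ᵥ x := by
    have := abs_mul_abs_self (x i)
    nlinarith [sq_nonneg (|x i| - 1)]
  have h3 := Real.add_one_le_exp (ε * (x ⬝ᵥ x))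
  have h0 := dot_self_nonneg' x
  have h4 : 1 + x ⬝ᵥ x ≤ (1 + 1 / ε) * (ε * (x ⬝ᵥ x) + 1) := by
    have : (1 + 1 / ε) * (ε * (x ⬝ᵥ x) + 1) = 1 + x ⬝ᵥ x + ε * (x ⬝ᵥ x) + 1 / ε := by
      field_simp; ring
    rw [this]
    have : 0 ≤ ε * (x ⬝ᵥ x) := by positivity
    have : 0 ≤ 1 / ε := by positivity
    linarith
  have h5 : (1 + 1 / ε) * (ε * (x ⬝ᵥ x) + 1) ≤ (1 + 1 / ε) * Real.exp (ε * (x ⬝ᵥ x)) := by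
    gcongr
  linarith

lemma Good.sum {k : ℕ} {ι : Type*} (s : Finset ι) {f : ι → (Fin k → ℝ) → ℝ}
    (hf : ∀ i, Good (f i)) : Good (fun x => ∑ i ∈ s, f i x) := by
  classical
  induction s using Finset.induction_on with
  | empty => simpa using Good.const 0
  | insert a s ha ih => simpa [Finset.sum_insert ha] using (hf a).add ih

lemma Good.lin {k : ℕ} (v : Fin k → ℝ) : Good (fun x : Fin k → ℝ => v ⬝ᵥ x) :=
  Good.sum _ fun i => (Good.const (v i)).mul (Good.coord i)

lemma Good.quad {k : ℕ} (A : Matrix (Fin k) (Fin k) ℝ) :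
    Good (fun x : Fin k → ℝ => x ⬝ᵥ (A *ᵥ x)) :=
  Good.sum _ fun i => (Good.coord i).mul (Good.lin (A i))

lemma Good.sub_const {k : ℕ} {f : (Fin k → ℝ) → ℝ} (hf : Good f) (c : ℝ) :
    Good (fun x => f x - c) := by
  simpa [sub_eq_add_neg] using hf.add (Good.const (-c))

noncomputable def dens {k : ℕ} (S : Matrix (Fin k) (Fin k) ℝ) (x : Fin k → ℝ) : ℝ :=
  (2 * Real.pi) ^ (-(k : ℝ) / 2) * S.det ^ (-(1 : ℝ) / 2) *
      Real.exp (-(x ⬝ᵥ (S⁻¹ *ᵥ x)) / 2)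

lemma quad_lower {k : ℕ} {M : Matrix (Fin k) (Fin k) ℝ} (hM : M.PosDef) :
    ∃ c : ℝ, 0 < c ∧ ∀ x : Fin k → ℝ, c * (x ⬝ᵥ x) ≤ x ⬝ᵥ (M *ᵥ x) := by
  obtain ⟨m, hm, h⟩ := (isCompact_sphere (0 : Fin k → ℝ) 1).exists_forall_le'
    (f := fun x => x ⬝ᵥ (M *ᵥ x)) (Good.quad M).1.continuousOn (a := 0) (by
      intro x hx
      have hx0 : x ≠ 0 := by
        rintro rfl
        simp at hx
      simpa using hM.dotProduct_mulVec_pos hx0)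
  refine ⟨m / (k + 1), by positivity, fun x => ?_⟩
  have hxx : x ⬝ᵥ x ≤ (k + 1) * ‖x‖ ^ 2 := by
    have : x ⬝ᵥ x ≤ ∑ i : Fin k, ‖x‖ ^ 2 := by
      refine Finset.sum_le_sum fun i _ => ?_
      have := norm_le_pi_norm x i
      rw [Real.norm_eq_abs] at this
      have h2 := abs_mul_abs_self (x i)
      nlinarith [abs_nonneg (x i)]
    simp at this
    nlinarith [sq_nonneg ‖x‖]
  have hq : m * ‖x‖ ^ 2 ≤ x ⬝ᵥ (M *ᵥ x) := by
    by_cases hx : x = 0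
    · simp [hx]
    have hn : ‖x‖ ≠ 0 := norm_ne_zero_iff.mpr hx
    have := h (‖x‖⁻¹ • x) (by simp [norm_smul, hn])
    simp only [Matrix.mulVec_smul, dotProduct_smul, smul_dotProduct, smul_eq_mul] at this
    have h3 := mul_le_mul_of_nonneg_right this (sq_nonneg ‖x‖)
    have h4 : ‖x‖⁻¹ * (‖x‖⁻¹ * x ⬝ᵥ (M *ᵥ x)) * ‖x‖ ^ 2 = x ⬝ᵥ (M *ᵥ x) := by
      field_simp
    linarith
  calc m / (k + 1) * (x ⬝ᵥ x) ≤ m / (k + 1) * ((k + 1) * ‖x‖ ^ 2) := by gcongr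
    _ = m * ‖x‖ ^ 2 := by field_simp
    _ ≤ _ := hq

lemma dens_cont {k : ℕ} (S : Matrix (Fin k) (Fin k) ℝ) : Continuous (dens S) := by
  unfold dens
  have := (Good.quad S⁻¹).1
  fun_prop

lemma integrable_gauss {k : ℕ} {c : ℝ} (hc : 0 < c) :
    Integrable (fun x : Fin k → ℝ => Real.exp (-c * (x ⬝ᵥ x))) := by
  have := Integrable.fintype_prod (ι := Fin k) (μ := fun _ => (volume : Measure ℝ))
    (f := fun _ t => Real.exp (-c * t ^ 2)) (fun _ => integrable_exp_neg_mul_sq hc)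
  refine this.congr (Filter.Eventually.of_forall fun x => ?_)
  beta_reduce
  rw [← Real.exp_sum, ← Finset.mul_sum]
  simp [dotProduct, sq]

lemma Good.int_dens {k : ℕ} {S : Matrix (Fin k) (Fin k) ℝ} (hS : S.PosDef)
    {f : (Fin k → ℝ) → ℝ} (hf : Good f) : Integrable (fun x => dens S x * f x) := by
  obtain ⟨c, hc, hq⟩ := quad_lower hS.inv
  obtain ⟨K, hK⟩ := hf.2 (c / 4) (by positivity)
  set C := (2 * Real.pi) ^ (-(k : ℝ) / 2) * S.det ^ (-(1 : ℝ) / 2) with hC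
  refine ((integrable_gauss (k := k) (c := c / 4) (by positivity)).const_mul (|C| * K)).mono'
    ((dens_cont S).mul hf.1).aestronglyMeasurable (Filter.Eventually.of_forall fun x => ?_)
  rw [Real.norm_eq_abs, abs_mul, dens, ← hC, abs_mul, abs_of_pos (Real.exp_pos _)]
  have h1 : Real.exp (-(x ⬝ᵥ (S⁻¹ *ᵥ x)) / 2) ≤ Real.exp (-(c / 2) * (x ⬝ᵥ x)) := by
    apply Real.exp_le_exp.mpr
    linarith [hq x]
  have h2 : Real.exp (-(c / 4) * (x ⬝ᵥ x)) =
      Real.exp (-(c / 2) * (x ⬝ᵥ x)) * Real.exp (c / 4 * (x ⬝ᵥ x)) := by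
    rw [← Real.exp_add]; ring_nf
  rw [h2]
  calc _ ≤ |C| * Real.exp (-(c / 2) * (x ⬝ᵥ x)) * (K * Real.exp (c / 4 * (x ⬝ᵥ x))) := by
        gcongr
        exact hK x
    _ = _ := by ring

lemma dens_nonneg {k : ℕ} {S : Matrix (Fin k) (Fin k) ℝ} (hS : S.PosDef) (x : Fin k → ℝ) :
    0 ≤ dens S x := by
  have := hS.det_pos
  unfold dens
  positivity

lemma integral_mv {k : ℕ} {S : Matrix (Fin k) (Fin k) ℝ} (hS : S.PosDef)
    (f : (Fin k → ℝ) → ℝ) : ∫ x, f x ∂(mvGaussian k S) = ∫ x, dens S x * f x := by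
  have hm : Measurable (fun x => ENNReal.ofReal (dens S x)) :=
    (dens_cont S).measurable.ennreal_ofReal
  have := integral_withDensity_eq_integral_toReal_smul (μ := volume) hm (by simp) f
  change ∫ x, f x ∂(volume.withDensity fun x => ENNReal.ofReal (dens S x)) = _
  rw [this]
  simp [ENNReal.toReal_ofReal, dens_nonneg hS]

lemma Good.int {k : ℕ} {S : Matrix (Fin k) (Fin k) ℝ} (hS : S.PosDef)
    {f : (Fin k → ℝ) → ℝ} (hf : Good f) : Integrable f (mvGaussian k S) := by
  have hm : Measurable (fun x => ENNReal.ofReal (dens S x)) :=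
    (dens_cont S).measurable.ennreal_ofReal
  change Integrable f (volume.withDensity fun x => ENNReal.ofReal (dens S x))
  rw [integrable_withDensity_iff_integrable_smul' hm (by simp)]
  simpa [ENNReal.toReal_ofReal, dens_nonneg hS] using hf.int_dens hS

lemma line_lin {k : ℕ} (v x d : Fin k → ℝ) :
    HasLineDerivAt ℝ (fun x : Fin k → ℝ => v ⬝ᵥ x) (v ⬝ᵥ d) x d := by
  unfold HasLineDerivAt
  simp only [dotProduct_add, dotProduct_smul, smul_eq_mul]
  simpa using ((hasDerivAt_id (0 : ℝ)).mul_const (v ⬝ᵥ d)).const_add (v ⬝ᵥ x)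

lemma line_quad {k : ℕ} {A : Matrix (Fin k) (Fin k) ℝ} (hA : A.IsSymm) (x d : Fin k → ℝ) :
    HasLineDerivAt ℝ (fun x : Fin k → ℝ => x ⬝ᵥ (A *ᵥ x)) (2 * (d ⬝ᵥ (A *ᵥ x))) x d := by
  unfold HasLineDerivAt
  have h : x ⬝ᵥ (A *ᵥ d) = d ⬝ᵥ (A *ᵥ x) := by
    rw [dotProduct_mulVec, ← Matrix.mulVec_transpose, hA.eq, dotProduct_comm]
  have e : (fun t : ℝ => (x + t • d) ⬝ᵥ (A *ᵥ (x + t • d))) = fun t =>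
      x ⬝ᵥ (A *ᵥ x) + (t * (2 * (d ⬝ᵥ (A *ᵥ x))) + t ^ 2 * (d ⬝ᵥ (A *ᵥ d))) := by
    funext t
    simp only [Matrix.mulVec_add, Matrix.mulVec_smul, dotProduct_add, add_dotProduct,
      dotProduct_smul, smul_dotProduct, smul_eq_mul, h]
    ring
  rw [e]
  have h1 := (hasDerivAt_id (0 : ℝ)).mul_const (2 * (d ⬝ᵥ (A *ᵥ x)))
  have h2 := (hasDerivAt_pow 2 (0 : ℝ)).mul_const (d ⬝ᵥ (A *ᵥ d))
  simpa using (h1.add h2).const_add (x ⬝ᵥ (A *ᵥ x))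

lemma line_mul {k : ℕ} {f g : (Fin k → ℝ) → ℝ} {f' g' : ℝ} {x d : Fin k → ℝ}
    (hf : HasLineDerivAt ℝ f f' x d) (hg : HasLineDerivAt ℝ g g' x d) :
    HasLineDerivAt ℝ (fun x => f x * g x) (f' * g x + f x * g') x d := by
  unfold HasLineDerivAt at *
  have := hf.mul hg
  simp only [zero_smul, add_zero] at this
  exact this

lemma line_sub_const {k : ℕ} {f : (Fin k → ℝ) → ℝ} {f' : ℝ} {x d : Fin k → ℝ}
    (hf : HasLineDerivAt ℝ f f' x d) (c : ℝ) :
    HasLineDerivAt ℝ (fun x => f x - c) f' x d := by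
  unfold HasLineDerivAt at *
  exact hf.sub_const c

lemma symm_of {k : ℕ} {S : Matrix (Fin k) (Fin k) ℝ} (hS : S.PosDef) : S.IsSymm := by
  have := hS.isHermitian.eq
  rwa [Matrix.conjTranspose_eq_transpose_of_trivial] at this

lemma line_dens {k : ℕ} {S : Matrix (Fin k) (Fin k) ℝ} (hS : S.PosDef) (w x : Fin k → ℝ) :
    HasLineDerivAt ℝ (dens S) (-(dens S x * (w ⬝ᵥ x))) x (S *ᵥ w) := by
  have h := line_quad (symm_of hS.inv) x (S *ᵥ w)
  have e : (S *ᵥ w) ⬝ᵥ (S⁻¹ *ᵥ x) = w ⬝ᵥ x := by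
    have hu : IsUnit S.det := hS.det_pos.ne'.isUnit
    rw [← (symm_of hS).eq, Matrix.mulVec_transpose, ← dotProduct_mulVec, (symm_of hS).eq,
      Matrix.mulVec_mulVec, Matrix.mul_nonsing_inv _ hu, Matrix.one_mulVec]
  rw [e] at h
  unfold HasLineDerivAt at *
  have := ((h.neg.div_const 2).exp).const_mul
    ((2 * Real.pi) ^ (-(k : ℝ) / 2) * S.det ^ (-(1 : ℝ) / 2))
  unfold dens
  refine HasDerivAt.congr_deriv this ?_
  simp
  ring

lemma stein {k : ℕ} {S : Matrix (Fin k) (Fin k) ℝ} (hS : S.PosDef) (w : Fin k → ℝ)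
    {f f' : (Fin k → ℝ) → ℝ} (hf : Good f) (hf' : Good f')
    (hd : ∀ x, HasLineDerivAt ℝ f (f' x) x (S *ᵥ w)) :
    ∫ x, (w ⬝ᵥ x) * f x ∂(mvGaussian k S) = ∫ x, f' x ∂(mvGaussian k S) := by
  rw [integral_mv hS, integral_mv hS]
  have h := integral_bilinear_hasLineDerivAt_right_eq_neg_left_of_integrable
    (μ := (volume : Measure (Fin k → ℝ))) (f := f) (f' := f') (g := dens S)
    (g' := fun x => -(dens S x * (w ⬝ᵥ x))) (v := S *ᵥ w) (B := ContinuousLinearMap.mul ℝ ℝ)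
    (by simpa [mul_comm] using hf'.int_dens hS)
    (by
      have := (((Good.lin w).mul hf).int_dens hS).neg
      refine this.congr (Filter.Eventually.of_forall fun x => ?_)
      simp
      ring)
    (by simpa [mul_comm] using hf.int_dens hS)
    (fun x _ => hd x) (fun x _ => line_dens hS w x)
  simp only [ContinuousLinearMap.mul_apply', mul_neg, integral_neg, neg_inj] at h
  calc _ = ∫ x, f x * (dens S x * (w ⬝ᵥ x)) := by congr 1; funext x; ring
    _ = _ := h
    _ = _ := by congr 1; funext x; ring

section
variable {k : ℕ} {S : Matrix (Fin k) (Fin k) ℝ}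

lemma cov (hS : S.PosDef) [IsProbabilityMeasure (mvGaussian k S)] (w v : Fin k → ℝ) :
    ∫ x, (w ⬝ᵥ x) * (v ⬝ᵥ x) ∂(mvGaussian k S) = v ⬝ᵥ (S *ᵥ w) := by
  rw [stein hS w (Good.lin v) (Good.const (v ⬝ᵥ (S *ᵥ w))) (fun x => line_lin v x _)]
  simp

lemma third (hS : S.PosDef) [IsProbabilityMeasure (mvGaussian k S)] {A : Matrix (Fin k) (Fin k) ℝ}
    (hA : A.IsSymm) (w v : Fin k → ℝ) :
    ∫ x, (w ⬝ᵥ x) * ((v ⬝ᵥ x) * (x ⬝ᵥ (A *ᵥ x) - ∫ y, y ⬝ᵥ (A *ᵥ y) ∂(mvGaussian k S)))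
      ∂(mvGaussian k S) = 2 * (w ⬝ᵥ ((S * A * S) *ᵥ v)) := by
  set t := ∫ y, y ⬝ᵥ (A *ᵥ y) ∂(mvGaussian k S) with ht
  have e : ∀ x, (S *ᵥ w) ⬝ᵥ (A *ᵥ x) = ((A * S) *ᵥ w) ⬝ᵥ x := by
    intro x
    rw [dotProduct_mulVec, ← Matrix.mulVec_transpose, hA.eq, Matrix.mulVec_mulVec]
  have gq := (Good.quad A).sub_const t
  have g2 : Good (fun x => 2 * (((A * S) *ᵥ w) ⬝ᵥ x)) := (Good.const 2).mul (Good.lin _)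
  rw [stein hS w ((Good.lin v).mul gq)
    (((Good.const (v ⬝ᵥ (S *ᵥ w))).mul gq).add ((Good.lin v).mul g2))
    (fun x => by
      have := line_mul (line_lin v x (S *ᵥ w)) (line_sub_const (line_quad hA x (S *ᵥ w)) t)
      rwa [e] at this)]
  rw [integral_add (((Good.const (v ⬝ᵥ (S *ᵥ w))).mul gq).int hS) (((Good.lin v).mul g2).int hS),
    integral_const_mul, integral_sub ((Good.quad A).int hS) (integrable_const _), ← ht]
  have e2 : ∀ x : Fin k → ℝ, (v ⬝ᵥ x) * (2 * (((A * S) *ᵥ w) ⬝ᵥ x))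
      = 2 * ((v ⬝ᵥ x) * (((A * S) *ᵥ w) ⬝ᵥ x)) := fun x => by ring
  simp only [e2]
  rw [integral_const_mul, cov hS]
  simp only [integral_const, probReal_univ, smul_eq_mul, one_mul, sub_self, mul_zero, zero_add]
  congr 1
  rw [← e, ← Matrix.vecMul_transpose, ← dotProduct_mulVec, (symm_of hS).eq]
  simp [Matrix.mulVec_mulVec, Matrix.mul_assoc]

lemma varq (hS : S.PosDef) [IsProbabilityMeasure (mvGaussian k S)]
    {A B : Matrix (Fin k) (Fin k) ℝ} (hA : A.IsSymm) (hB : B.IsSymm) :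
    ∫ x, (x ⬝ᵥ (A *ᵥ x) - ∫ y, y ⬝ᵥ (A *ᵥ y) ∂(mvGaussian k S)) *
      (x ⬝ᵥ (B *ᵥ x) - ∫ y, y ⬝ᵥ (B *ᵥ y) ∂(mvGaussian k S))
      ∂(mvGaussian k S) = 2 * (A * S * B * S).trace := by
  have third' := fun w v => third hS hB w v
  set t := ∫ y, y ⬝ᵥ (A *ᵥ y) ∂(mvGaussian k S) with ht
  set s := ∫ y, y ⬝ᵥ (B *ᵥ y) ∂(mvGaussian k S) with hs
  have gq := (Good.quad B).sub_const s
  have e : ∀ x : Fin k → ℝ, (x ⬝ᵥ (A *ᵥ x) - t) * (x ⬝ᵥ (B *ᵥ x) - s) =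
      (∑ i, (Pi.single i (1 : ℝ) ⬝ᵥ x) * ((A i ⬝ᵥ x) * (x ⬝ᵥ (B *ᵥ x) - s)))
        - t * (x ⬝ᵥ (B *ᵥ x) - s) := by
    intro x
    rw [sub_mul]
    congr 1
    rw [dotProduct, Finset.sum_mul]
    refine Finset.sum_congr rfl fun i _ => ?_
    simp [Matrix.mulVec, mul_assoc]
  have gi : ∀ i : Fin k, Good (fun x : Fin k → ℝ =>
      (Pi.single i (1 : ℝ) ⬝ᵥ x) * ((A i ⬝ᵥ x) * (x ⬝ᵥ (B *ᵥ x) - s))) := fun i =>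
    (Good.lin _).mul ((Good.lin _).mul gq)
  simp only [e]
  rw [integral_sub ((Good.sum _ gi).int hS) (((Good.const t).mul gq).int hS),
    integral_finsetSum _ (fun i _ => (gi i).int hS), integral_const_mul,
    integral_sub ((Good.quad B).int hS) (integrable_const _), ← hs]
  simp only [third', integral_const, probReal_univ, smul_eq_mul, one_mul, sub_self, mul_zero,
    sub_zero, ← Finset.mul_sum]
  congr 1
  have e3 : A * S * B * S = A * (S * B * S) := by simp only [Matrix.mul_assoc]
  rw [e3, Matrix.trace_mul_comm]
  simp only [Matrix.trace, Matrix.diag]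
  refine Finset.sum_congr rfl fun i _ => ?_
  rw [single_one_dotProduct, Matrix.mul_apply, Matrix.mulVec, dotProduct]
  refine Finset.sum_congr rfl fun j _ => ?_
  rw [hA.apply]

lemma main (hS : S.PosDef) [IsProbabilityMeasure (mvGaussian k S)]
    {A B : Matrix (Fin k) (Fin k) ℝ} (hA : A.IsSymm) (hB : B.IsSymm) (w v : Fin k → ℝ) :
    ∫ x, (w ⬝ᵥ x) * ((v ⬝ᵥ x) * ((x ⬝ᵥ (A *ᵥ x) - ∫ y, y ⬝ᵥ (A *ᵥ y) ∂(mvGaussian k S)) *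
      (x ⬝ᵥ (B *ᵥ x) - ∫ y, y ⬝ᵥ (B *ᵥ y) ∂(mvGaussian k S))))
      ∂(mvGaussian k S) = 2 * (A * S * B * S).trace * (v ⬝ᵥ (S *ᵥ w))
        + 4 * (v ⬝ᵥ ((S * B * S * A * S) *ᵥ w)) + 4 * (v ⬝ᵥ ((S * A * S * B * S) *ᵥ w)) := by
  have hv := varq hS hA hB
  have tA := fun w v => third hS hA w v
  have tB := fun w v => third hS hB w v
  set t := ∫ y, y ⬝ᵥ (A *ᵥ y) ∂(mvGaussian k S) with ht
  set s := ∫ y, y ⬝ᵥ (B *ᵥ y) ∂(mvGaussian k S) with hs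
  have gA := (Good.quad A).sub_const t
  have gB := (Good.quad B).sub_const s
  have e : ∀ {A : Matrix (Fin k) (Fin k) ℝ}, A.IsSymm → ∀ x,
      (S *ᵥ w) ⬝ᵥ (A *ᵥ x) = ((A * S) *ᵥ w) ⬝ᵥ x := by
    intro A hA x
    rw [dotProduct_mulVec, ← Matrix.mulVec_transpose, hA.eq, Matrix.mulVec_mulVec]
  have g1 := (Good.const (v ⬝ᵥ (S *ᵥ w))).mul (gA.mul gB)
  have g2 := (Good.const 2).mul
    ((Good.lin v).mul ((Good.lin ((A * S) *ᵥ w)).mul gB))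
  have g3 := (Good.const 2).mul
    ((Good.lin v).mul ((Good.lin ((B * S) *ᵥ w)).mul gA))
  rw [stein hS w ((Good.lin v).mul (gA.mul gB)) ((g1.add g2).add g3)
    (fun x => by
      have := line_mul (line_lin v x (S *ᵥ w))
        (line_mul (line_sub_const (line_quad hA x (S *ᵥ w)) t)
          (line_sub_const (line_quad hB x (S *ᵥ w)) s))
      rw [e hA, e hB] at this
      convert this using 1
      ring)]
  rw [integral_add ((g1.add g2).int hS) (g3.int hS), integral_add (g1.int hS) (g2.int hS),
    integral_const_mul, integral_const_mul, integral_const_mul, hv, tA, tB]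
  simp only [Matrix.mulVec_mulVec, Matrix.mul_assoc]
  ring

end

end QF

/-- If `u ~ N(0, Σ)` with `Σ` positive definite and `A₁, A₂` are symmetric, then
`E[u (u′A₁u − E u′A₁u)(u′A₂u − E u′A₂u) u′] = 2 tr(A₁ΣA₂Σ) Σ + 4 ΣA₁ΣA₂Σ + 4 ΣA₂ΣA₁Σ`
entrywise. -/
theorem stmt2 {k : ℕ} {Ω : Type*} [MeasurableSpace Ω] (P : Measure Ω)
    [IsProbabilityMeasure P]
    (S A₁ A₂ : Matrix (Fin k) (Fin k) ℝ) (hS : S.PosDef)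
    (hA₁ : A₁.IsSymm) (hA₂ : A₂.IsSymm)
    (u : Ω → Fin k → ℝ) (hu : Measurable u)
    (hlaw : P.map u = mvGaussian k S) (a b : Fin k) :
    ∫ ω, u ω a * (((u ω ⬝ᵥ (A₁ *ᵥ u ω)) - ∫ ω', u ω' ⬝ᵥ (A₁ *ᵥ u ω') ∂P) *
        ((u ω ⬝ᵥ (A₂ *ᵥ u ω)) - ∫ ω', u ω' ⬝ᵥ (A₂ *ᵥ u ω') ∂P)) * u ω b ∂P
      = 2 * (A₁ * S * A₂ * S).trace * S a b
        + 4 * (S * A₁ * S * A₂ * S) a b + 4 * (S * A₂ * S * A₁ * S) a b := by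
  haveI : IsProbabilityMeasure (mvGaussian k S) := by
    rw [← hlaw]
    exact Measure.isProbabilityMeasure_map hu.aemeasurable
  have tr : ∀ f : (Fin k → ℝ) → ℝ, Continuous f →
      ∫ ω, f (u ω) ∂P = ∫ x, f x ∂(mvGaussian k S) := by
    intro f hf
    rw [← hlaw, integral_map hu.aemeasurable hf.aestronglyMeasurable]
  rw [tr _ (QF.Good.quad A₁).1, tr _ (QF.Good.quad A₂).1]
  have h := QF.main hS hA₁ hA₂ (Pi.single b 1) (Pi.single a 1)
  have hc := ((QF.Good.coord a).mul (((QF.Good.quad A₁).sub_const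
    (∫ y, y ⬝ᵥ (A₁ *ᵥ y) ∂(mvGaussian k S))).mul ((QF.Good.quad A₂).sub_const
    (∫ y, y ⬝ᵥ (A₂ *ᵥ y) ∂(mvGaussian k S))))).mul (QF.Good.coord b)
  rw [tr _ hc.1]
  simp only [single_one_dotProduct, Matrix.mulVec_single_one, Matrix.col_apply] at h
  rw [add_right_comm, ← h]
  congr 1
  funext x
  ring
end

section
/- Let u be a k-dimensional random vector with the multivariate normal distribution N(0, Σ), where Σ is a k×k positive definite real matrix. For j = 1, …, s let λⱼ be nonrandom vectors in ℝᵏ and Aⱼ be k×k symmetric real matrices, and set wⱼ = λⱼ′u, Wⱼ = u′Aⱼu, w = (w₁, …, w_s)′, W = (W₁, …, W_s)′. Then E[(w′(W − E[W]))²] = tr(Σ_w Σ_W) + 4 ∑_{j=1}^{s} ∑_{l=1}^{s} λⱼ′ Σ (Aⱼ Σ A_l + A_l Σ Aⱼ) Σ λ_l, where Σ_w is the s×s covariance matrix of w, with (j,l) entry λⱼ′Σλ_l, and Σ_W is the s×s covariance matrix of W, with (j,l) entry 2 tr(AⱼΣA_lΣ). -/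
open MeasureTheory Matrix Real

noncomputable def linP {k : ℕ} (a : Fin k → ℝ) : MvPolynomial (Fin k) ℝ :=
  ∑ i, MvPolynomial.C (a i) * MvPolynomial.X i

noncomputable def quadP {k : ℕ} (A : Matrix (Fin k) (Fin k) ℝ) : MvPolynomial (Fin k) ℝ :=
  ∑ i, MvPolynomial.X i * linP (A i)

noncomputable def dirD {k : ℕ} (v : Fin k → ℝ) :
    Derivation ℝ (MvPolynomial (Fin k) ℝ) (MvPolynomial (Fin k) ℝ) :=
  MvPolynomial.mkDerivation ℝ (fun i => MvPolynomial.C (v i))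

lemma dirD_X {k : ℕ} (v : Fin k → ℝ) (i : Fin k) :
    dirD v (MvPolynomial.X i) = MvPolynomial.C (v i) := by
  simp [dirD]

lemma dirD_C {k : ℕ} (v : Fin k → ℝ) (c : ℝ) :
    dirD v (MvPolynomial.C c) = 0 := by
  simp [dirD]

lemma dirD_lin {k : ℕ} (v a : Fin k → ℝ) :
    dirD v (linP a) = MvPolynomial.C (a ⬝ᵥ v) := by
  simp [linP, dirD_X, Derivation.leibniz, dotProduct, map_sum]

lemma eval_lin {k : ℕ} (x a : Fin k → ℝ) : MvPolynomial.eval x (linP a) = a ⬝ᵥ x := by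
  simp [linP, dotProduct]

lemma eval_quad {k : ℕ} (x : Fin k → ℝ) (A : Matrix (Fin k) (Fin k) ℝ) :
    MvPolynomial.eval x (quadP A) = x ⬝ᵥ (A *ᵥ x) := by
  simp [quadP, eval_lin, dotProduct, mulVec]

lemma dirD_quad {k : ℕ} (v : Fin k → ℝ) (A : Matrix (Fin k) (Fin k) ℝ) (hA : A.IsSymm) :
    dirD v (quadP A) = MvPolynomial.C 2 * linP (A *ᵥ v) := by
  have h1 : ∀ i j, A i j = A j i := fun i j => hA.apply j i
  have : dirD v (quadP A) = (∑ i, linP (A i) * MvPolynomial.C (v i)) + linP (A *ᵥ v) := by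
    rw [quadP, map_sum, linP, ← Finset.sum_add_distrib]
    refine Finset.sum_congr rfl fun i _ => ?_
    rw [Derivation.leibniz, dirD_X, dirD_lin, smul_eq_mul, smul_eq_mul, mulVec]
    ring
  rw [this]
  have h2 : (∑ i, linP (A i) * MvPolynomial.C (v i)) = linP (A *ᵥ v) := by
    simp only [linP, Finset.sum_mul, mulVec, dotProduct, map_sum, map_mul]
    rw [Finset.sum_comm]
    refine Finset.sum_congr rfl fun i _ => Finset.sum_congr rfl fun j _ => ?_
    rw [h1 i j]; ring
  rw [h2]
  have : (MvPolynomial.C 2 : MvPolynomial (Fin k) ℝ) = 2 := map_ofNat _ 2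
  rw [this]; ring

section
variable {k : ℕ} (E : MvPolynomial (Fin k) ℝ →ₗ[ℝ] ℝ) (S : Matrix (Fin k) (Fin k) ℝ)

lemma E_C (p : MvPolynomial (Fin k) ℝ) (c : ℝ) : E (MvPolynomial.C c * p) = c * E p := by
  rw [MvPolynomial.C_mul', map_smul, smul_eq_mul]

lemma E_two (hE1 : E 1 = 1) (hE : ∀ a p, E (linP a * p) = E (dirD (S *ᵥ a) p))
    (a b : Fin k → ℝ) : E (linP a * linP b) = b ⬝ᵥ (S *ᵥ a) := by
  rw [hE, dirD_lin, ← mul_one (MvPolynomial.C _), E_C, hE1, mul_one]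

/-- E[(a·u)(b·u) V] for V centred -/
lemma E_four (hE1 : E 1 = 1) (hE : ∀ a p, E (linP a * p) = E (dirD (S *ᵥ a) p))
    (a b : Fin k → ℝ) (B : Matrix (Fin k) (Fin k) ℝ) (hB : B.IsSymm) :
    E (linP a * (linP b * (quadP B - MvPolynomial.C (E (quadP B)))))
      = 2 * ((B *ᵥ (S *ᵥ a)) ⬝ᵥ (S *ᵥ b)) := by
  have hC : E (MvPolynomial.C (E (quadP B))) = E (quadP B) := by
    rw [← mul_one (MvPolynomial.C _), E_C, hE1, mul_one]
  rw [hE, Derivation.leibniz, dirD_lin, map_sub, dirD_C, dirD_quad _ _ hB, sub_zero, smul_eq_mul,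
    smul_eq_mul, map_add, mul_left_comm, E_C, E_two E S hE1 hE, mul_comm _ (MvPolynomial.C _),
    E_C, map_sub, hC]
  ring

lemma E_VV (hE1 : E 1 = 1) (hE : ∀ a p, E (linP a * p) = E (dirD (S *ᵥ a) p))
    (hS : S.IsSymm) (A B : Matrix (Fin k) (Fin k) ℝ) (_hA : A.IsSymm) (hB : B.IsSymm) :
    E ((quadP A - MvPolynomial.C (E (quadP A))) * (quadP B - MvPolynomial.C (E (quadP B))))
      = 2 * (A * S * B * S).trace := by
  have hC : E (MvPolynomial.C (E (quadP B))) = E (quadP B) := by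
    rw [← mul_one (MvPolynomial.C _), E_C, hE1, mul_one]
  rw [sub_mul, map_sub, E_C, map_sub E (quadP B), hC, sub_self, mul_zero, sub_zero, quadP,
    Finset.sum_mul, map_sum, trace, Finset.mul_sum]
  refine Finset.sum_congr rfl fun i _ => ?_
  have hX : (MvPolynomial.X i : MvPolynomial (Fin k) ℝ) = linP (Pi.single i 1) := by
    rw [linP, Finset.sum_eq_single i] <;> simp +contextual
  rw [mul_assoc, hX, E_four E S hE1 hE _ _ B hB]
  congr 1
  have h1 : S *ᵥ (Pi.single i 1) = fun m => S m i := by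
    ext m; simp
  have h2 : S *ᵥ (A i) = fun m => (A * S) i m := by
    ext m
    simp only [mulVec, dotProduct, mul_apply]
    exact Finset.sum_congr rfl fun j _ => by rw [mul_comm, hS.apply m j]
  rw [h1, h2, diag_apply, mul_assoc, mul_apply, dotProduct]
  refine Finset.sum_congr rfl fun m _ => ?_
  rw [mul_comm]; rfl

lemma E_main (hE1 : E 1 = 1) (hE : ∀ a p, E (linP a * p) = E (dirD (S *ᵥ a) p))
    (hS : S.IsSymm) (a b : Fin k → ℝ)
    (A B : Matrix (Fin k) (Fin k) ℝ) (hA : A.IsSymm) (hB : B.IsSymm) :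
    E ((linP a * (quadP A - MvPolynomial.C (E (quadP A)))) *
        (linP b * (quadP B - MvPolynomial.C (E (quadP B)))))
      = (a ⬝ᵥ (S *ᵥ b)) * (2 * (B * S * A * S).trace)
        + 4 * (a ⬝ᵥ ((S * (A * S * B + B * S * A) * S) *ᵥ b)) := by
  set V := quadP A - MvPolynomial.C (E (quadP A)) with hV
  set U := quadP B - MvPolynomial.C (E (quadP B)) with hU
  have dV : ∀ v, dirD v V = MvPolynomial.C 2 * linP (A *ᵥ v) := fun v => by
    rw [hV, map_sub, dirD_C, sub_zero, dirD_quad _ _ hA]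
  have dU : ∀ v, dirD v U = MvPolynomial.C 2 * linP (B *ᵥ v) := fun v => by
    rw [hU, map_sub, dirD_C, sub_zero, dirD_quad _ _ hB]
  have e : (linP a * V) * (linP b * U) = linP a * (linP b * (V * U)) := by ring
  have e2 : dirD (S *ᵥ a) (linP b * (V * U)) = MvPolynomial.C (b ⬝ᵥ (S *ᵥ a)) * (U * V)
      + MvPolynomial.C 2 * (linP (A *ᵥ (S *ᵥ a)) * (linP b * U))
      + MvPolynomial.C 2 * (linP (B *ᵥ (S *ᵥ a)) * (linP b * V)) := by
    rw [Derivation.leibniz, Derivation.leibniz, dirD_lin, dV, dU]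
    simp only [smul_eq_mul]
    ring
  have sym : ∀ (M : Matrix (Fin k) (Fin k) ℝ) (hM : M.IsSymm) (x y : Fin k → ℝ),
      (M *ᵥ x) ⬝ᵥ y = x ⬝ᵥ (M *ᵥ y) := by
    intro M hM x y
    rw [dotProduct_mulVec, ← mulVec_transpose, hM.eq]
  rw [e, hE, e2, map_add, map_add, E_C, E_C, E_C, hU, hV, E_VV E S hE1 hE hS _ _ hB hA,
    E_four E S hE1 hE _ _ _ hB, E_four E S hE1 hE _ _ _ hA, dotProduct_comm b, sym S hS]
  simp only [sym S hS, sym A hA, sym B hB]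
  simp only [mulVec_mulVec, mul_add, add_mul, add_mulVec,
    dotProduct_add, Matrix.mul_assoc]
  ring

lemma E_final {s : ℕ} (hE1 : E 1 = 1) (hE : ∀ a p, E (linP a * p) = E (dirD (S *ᵥ a) p))
    (hS : S.IsSymm) (lam : Fin s → Fin k → ℝ)
    (A : Fin s → Matrix (Fin k) (Fin k) ℝ) (hA : ∀ j, (A j).IsSymm) :
    E ((∑ j, linP (lam j) * (quadP (A j) - MvPolynomial.C (E (quadP (A j))))) ^ 2)
     = ((Matrix.of fun j l => lam j ⬝ᵥ (S *ᵥ lam l)) *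
        (Matrix.of fun j l => 2 * (A j * S * A l * S).trace)).trace
        + 4 * ∑ j, ∑ l, lam j ⬝ᵥ ((S * (A j * S * A l + A l * S * A j) * S) *ᵥ lam l) := by
  have hl : E ((∑ j, linP (lam j) * (quadP (A j) - MvPolynomial.C (E (quadP (A j))))) ^ 2)
      = ∑ j, ∑ l, ((lam j ⬝ᵥ (S *ᵥ lam l)) * (2 * (A l * S * A j * S).trace)
        + 4 * (lam j ⬝ᵥ ((S * (A j * S * A l + A l * S * A j) * S) *ᵥ lam l))) := by
    rw [sq, Finset.sum_mul_sum, map_sum]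
    refine Finset.sum_congr rfl fun j _ => ?_
    rw [map_sum]
    exact Finset.sum_congr rfl fun l _ => E_main E S hE1 hE hS _ _ _ _ (hA _) (hA _)
  rw [hl]
  simp only [Finset.sum_add_distrib, ← Finset.mul_sum]
  rfl

end

lemma posdef_bound {k : ℕ} (Q : Matrix (Fin k) (Fin k) ℝ) (hQ : Q.PosDef) :
    ∃ c : ℝ, 0 < c ∧ ∀ x : Fin k → ℝ, c * ∑ i, x i ^ 2 ≤ x ⬝ᵥ (Q *ᵥ x) := by
  have hcont : Continuous fun x : Fin k → ℝ => x ⬝ᵥ (Q *ᵥ x) := by fun_prop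
  have hpos : ∀ x : Fin k → ℝ, x ≠ 0 → 0 < x ⬝ᵥ (Q *ᵥ x) := fun x hx => by
    simpa using hQ.dotProduct_mulVec_pos hx
  rcases (Metric.sphere (0 : Fin k → ℝ) 1).eq_empty_or_nonempty with h | h
  · refine ⟨1, one_pos, fun x => ?_⟩
    have hx : x = 0 := by
      by_contra hx
      have : (‖x‖⁻¹ • x) ∈ Metric.sphere (0 : Fin k → ℝ) 1 := by
        simp [norm_smul, hx]
      rw [h] at this
      exact this
    simp [hx]
  · obtain ⟨y, hy, hmin⟩ := (isCompact_sphere (0 : Fin k → ℝ) 1).exists_isMinOn h hcont.continuousOn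
    have hy0 : y ≠ 0 := by
      rintro rfl
      simp at hy
    set m := y ⬝ᵥ (Q *ᵥ y) with hm
    have hm0 : 0 < m := hpos y hy0
    have hk : (0:ℝ) < k + 1 := by positivity
    refine ⟨m / (k + 1), by positivity, fun x => ?_⟩
    by_cases hx : x = 0
    · simp [hx]
    have hx' : 0 < ‖x‖ := norm_pos_iff.2 hx
    have h1 : (‖x‖⁻¹ • x) ∈ Metric.sphere (0 : Fin k → ℝ) 1 := by
      simp [norm_smul, hx]
    have h2 : m ≤ (‖x‖⁻¹ • x) ⬝ᵥ (Q *ᵥ (‖x‖⁻¹ • x)) := hmin h1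
    rw [mulVec_smul, dotProduct_smul, smul_dotProduct, smul_eq_mul, smul_eq_mul] at h2
    have h3 : m * ‖x‖ ^ 2 ≤ x ⬝ᵥ (Q *ᵥ x) := by
      calc m * ‖x‖ ^ 2 ≤ (‖x‖⁻¹ * (‖x‖⁻¹ * (x ⬝ᵥ (Q *ᵥ x)))) * ‖x‖ ^ 2 := by gcongr
        _ = _ := by field_simp
    have h4 : ∑ i, x i ^ 2 ≤ k * ‖x‖ ^ 2 := by
      calc ∑ i, x i ^ 2 ≤ ∑ i : Fin k, ‖x‖ ^ 2 := by
            refine Finset.sum_le_sum fun i _ => ?_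
            rw [← sq_abs]
            gcongr
            exact norm_le_pi_norm x i
        _ = _ := by simp
    calc m / (k + 1) * ∑ i, x i ^ 2 ≤ m / (k + 1) * ((k + 1) * ‖x‖ ^ 2) := by
          gcongr
          nlinarith [sq_nonneg ‖x‖]
      _ = m * ‖x‖ ^ 2 := by field_simp
      _ ≤ _ := h3

lemma int_1d (b : ℝ) (hb : 0 < b) (n : ℕ) :
    Integrable (fun x : ℝ => x ^ n * Real.exp (-b * x ^ 2)) := by
  have := integrable_rpow_mul_exp_neg_mul_sq hb (s := n) (by
    have : (0:ℝ) ≤ n := by positivity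
    linarith)
  simpa using this

lemma int_poly {k : ℕ} (Q : Matrix (Fin k) (Fin k) ℝ) (hQ : Q.PosDef)
    (p : MvPolynomial (Fin k) ℝ) :
    Integrable (fun x : Fin k → ℝ =>
      MvPolynomial.eval x p * Real.exp (-(x ⬝ᵥ (Q *ᵥ x)) / 2)) := by
  obtain ⟨c, hc, hb⟩ := posdef_bound Q hQ
  induction p using MvPolynomial.induction_on' with
  | monomial m r =>
    have h1 : Integrable (fun x : Fin k → ℝ =>
        r * ∏ i, (x i ^ m i * Real.exp (-(c / 2) * x i ^ 2))) := by
      refine Integrable.const_mul ?_ r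
      exact Integrable.fintype_prod (f := fun i (y : ℝ) => y ^ m i * Real.exp (-(c / 2) * y ^ 2))
        fun i => int_1d (c / 2) (by positivity) (m i)
    refine h1.mono (by
      refine Continuous.aestronglyMeasurable ?_
      have := MvPolynomial.continuous_eval (MvPolynomial.monomial m r)
      fun_prop) (Filter.Eventually.of_forall fun x => ?_)
    rw [Finset.prod_mul_distrib, ← Real.exp_sum, ← Finset.mul_sum, MvPolynomial.eval_monomial,
      Finsupp.prod_fintype _ _ (by simp), norm_mul, ← mul_assoc, norm_mul (_ * _)]
    refine mul_le_mul_of_nonneg_left ?_ (norm_nonneg _)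
    rw [Real.norm_eq_abs, Real.norm_eq_abs, Real.abs_exp, Real.abs_exp, Real.exp_le_exp]
    linarith [hb x]
  | add p q hp hq =>
    refine (hp.add hq).congr (Filter.Eventually.of_forall fun x => ?_)
    simp [add_mul]

lemma hasLineDeriv_poly {k : ℕ} (v x : Fin k → ℝ) (p : MvPolynomial (Fin k) ℝ) :
    HasLineDerivAt ℝ (fun y : Fin k → ℝ => MvPolynomial.eval y p)
      (MvPolynomial.eval x (dirD v p)) x v := by
  induction p using MvPolynomial.induction_on with
  | C a => simpa [HasLineDerivAt, dirD_C] using hasDerivAt_const (0:ℝ) a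
  | add p q hp hq =>
    rw [HasLineDerivAt]
    simp only [map_add]
    exact HasDerivAt.add hp hq
  | mul_X p i hp =>
    have h1 : HasDerivAt (fun t : ℝ => x i + t * v i) (v i) 0 := by
      simpa using ((hasDerivAt_id (0:ℝ)).mul_const (v i)).const_add (x i)
    have := HasDerivAt.mul hp h1
    rw [HasLineDerivAt]
    have e : (fun t : ℝ => MvPolynomial.eval (x + t • v) (p * MvPolynomial.X i)) =
        (fun t => (fun y => (MvPolynomial.eval y) p) (x + t • v)) * fun t => x i + t * v i := by
      ext t; simp
    rw [e]
    refine this.congr_deriv ?_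
    simp [Derivation.leibniz, dirD_X]; ring

lemma hasLineDeriv_gauss {k : ℕ} (Q : Matrix (Fin k) (Fin k) ℝ) (hQ : Q.IsSymm)
    (v x : Fin k → ℝ) :
    HasLineDerivAt ℝ (fun y : Fin k → ℝ => Real.exp (-(y ⬝ᵥ (Q *ᵥ y)) / 2))
      (-((Q *ᵥ v) ⬝ᵥ x) * Real.exp (-(x ⬝ᵥ (Q *ᵥ x)) / 2)) x v := by
  have h := hasLineDeriv_poly v x (quadP Q)
  rw [dirD_quad _ _ hQ] at h
  simp only [eval_quad, map_mul, MvPolynomial.eval_C, eval_lin] at h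
  have h2 := ((HasDerivAt.neg h).div_const 2).exp
  rw [HasLineDerivAt]
  refine h2.congr_deriv ?_
  simp
  ring

lemma stein {k : ℕ} (S : Matrix (Fin k) (Fin k) ℝ) (hS : S.PosDef) (a : Fin k → ℝ)
    (p : MvPolynomial (Fin k) ℝ) :
    ∫ x : Fin k → ℝ, MvPolynomial.eval x (linP a * p) * Real.exp (-(x ⬝ᵥ (S⁻¹ *ᵥ x)) / 2)
      = ∫ x : Fin k → ℝ, MvPolynomial.eval x (dirD (S *ᵥ a) p) *
          Real.exp (-(x ⬝ᵥ (S⁻¹ *ᵥ x)) / 2) := by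
  have hQ := hS.inv
  have hQs : S⁻¹.IsSymm := by simpa [IsHermitian, IsSymm] using hQ.isHermitian
  have hinv : S⁻¹ *ᵥ (S *ᵥ a) = a := by
    rw [mulVec_mulVec, nonsing_inv_mul _ ((isUnit_iff_isUnit_det _).1 hS.isUnit), one_mulVec]
  have key := integral_bilinear_hasLineDerivAt_right_eq_neg_left_of_integrable
    (μ := (volume : Measure (Fin k → ℝ))) (B := ContinuousLinearMap.mul ℝ ℝ)
    (f := fun y => MvPolynomial.eval y p) (f' := fun x => MvPolynomial.eval x (dirD (S *ᵥ a) p))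
    (g := fun y => Real.exp (-(y ⬝ᵥ (S⁻¹ *ᵥ y)) / 2))
    (g' := fun x => -((S⁻¹ *ᵥ (S *ᵥ a)) ⬝ᵥ x) * Real.exp (-(x ⬝ᵥ (S⁻¹ *ᵥ x)) / 2))
    (v := S *ᵥ a) (int_poly _ hQ _) (by
      refine (int_poly _ hQ (-(linP a * p))).congr (Filter.Eventually.of_forall fun x => ?_)
      simp [eval_lin, hinv]; ring) (int_poly _ hQ _)
    (fun x _ => hasLineDeriv_poly _ x p) (fun x _ => hasLineDeriv_gauss _ hQs _ x)
  simp only [ContinuousLinearMap.mul_apply'] at key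
  rw [← neg_inj, ← key, ← integral_neg]
  refine integral_congr_ae (Filter.Eventually.of_forall fun x => ?_)
  simp [eval_lin, hinv]; ring

lemma gauss_integral {k : ℕ} (S : Matrix (Fin k) (Fin k) ℝ) (hS : S.PosDef)
    (f : (Fin k → ℝ) → ℝ) :
    ∫ x, f x ∂(mvGaussian k S) = ((2 * Real.pi) ^ (-(k : ℝ) / 2) * S.det ^ (-(1 : ℝ) / 2)) *
      ∫ x, f x * Real.exp (-(x ⬝ᵥ (S⁻¹ *ᵥ x)) / 2) := by
  have hd := hS.det_pos
  rw [mvGaussian, integral_withDensity_eq_integral_toReal_smul₀ (by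
    refine Measurable.aemeasurable (Measurable.ennreal_ofReal ?_)
    refine Continuous.measurable ?_
    fun_prop) (Filter.Eventually.of_forall fun x => ENNReal.ofReal_lt_top), ← integral_const_mul]
  refine integral_congr_ae (Filter.Eventually.of_forall fun x => ?_)
  simp only [smul_eq_mul]
  rw [ENNReal.toReal_ofReal (by positivity)]
  ring

lemma gauss_integrable {k : ℕ} (S : Matrix (Fin k) (Fin k) ℝ) (hS : S.PosDef)
    (p : MvPolynomial (Fin k) ℝ) :
    Integrable (fun x => MvPolynomial.eval x p) (mvGaussian k S) := by
  have hd := hS.det_pos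
  rw [mvGaussian, integrable_withDensity_iff_integrable_smul' (by
    refine (Measurable.ennreal_ofReal ?_)
    refine Continuous.measurable ?_
    fun_prop) (Filter.Eventually.of_forall fun x => ENNReal.ofReal_lt_top)]
  refine ((int_poly _ hS.inv p).const_mul
    ((2 * Real.pi) ^ (-(k : ℝ) / 2) * S.det ^ (-(1 : ℝ) / 2))).congr
    (Filter.Eventually.of_forall fun x => ?_)
  simp only [smul_eq_mul]
  rw [ENNReal.toReal_ofReal (by positivity)]
  ring

noncomputable def gaussE {k : ℕ} (S : Matrix (Fin k) (Fin k) ℝ) (hS : S.PosDef) :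
    MvPolynomial (Fin k) ℝ →ₗ[ℝ] ℝ where
  toFun p := ∫ x, MvPolynomial.eval x p ∂(mvGaussian k S)
  map_add' p q := by
    simp only [map_add]
    exact integral_add (gauss_integrable S hS p) (gauss_integrable S hS q)
  map_smul' c p := by
    simp only [MvPolynomial.smul_eval, RingHom.id_apply, smul_eq_mul]
    exact integral_const_mul _ _

/-- Lemma 3.1(iv): for `u ~ N(0, Σ)`, linear forms `wⱼ = λⱼ′u` and quadratic forms
`Wⱼ = u′Aⱼu` with `Aⱼ` symmetric,
`E[(w′(W − E W))²] = tr(Σ_w Σ_W) + 4 ∑ⱼ∑ₗ λⱼ′Σ(AⱼΣAₗ + AₗΣAⱼ)Σλₗ`,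
where `Σ_w` has entries `λⱼ′Σλₗ` and `Σ_W` has entries `2 tr(AⱼΣAₗΣ)`. -/
theorem stmt3 {k s : ℕ} {Ω : Type*} [MeasurableSpace Ω] (P : Measure Ω)
    [IsProbabilityMeasure P]
    (S : Matrix (Fin k) (Fin k) ℝ) (hS : S.PosDef)
    (lam : Fin s → (Fin k → ℝ))
    (A : Fin s → Matrix (Fin k) (Fin k) ℝ) (hA : ∀ j, (A j).IsSymm)
    (u : Ω → Fin k → ℝ) (hu : Measurable u)
    (hlaw : P.map u = mvGaussian k S)
    (Sw SW : Matrix (Fin s) (Fin s) ℝ)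
    (hSw : Sw = Matrix.of fun j l => lam j ⬝ᵥ (S *ᵥ lam l))
    (hSW : SW = Matrix.of fun j l => 2 * (A j * S * A l * S).trace) :
    ∫ ω, (∑ j, (lam j ⬝ᵥ u ω) *
        ((u ω ⬝ᵥ (A j *ᵥ u ω)) - ∫ ω', u ω' ⬝ᵥ (A j *ᵥ u ω') ∂P)) ^ 2 ∂P
      = (Sw * SW).trace
        + 4 * ∑ j, ∑ l, lam j ⬝ᵥ ((S * (A j * S * A l + A l * S * A j) * S) *ᵥ lam l) := by
  have hSs : S.IsSymm := by simpa [IsHermitian, IsSymm] using hS.isHermitian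
  have hE1 : gaussE S hS 1 = 1 := by
    have : IsProbabilityMeasure (mvGaussian k S) :=
      hlaw ▸ Measure.isProbabilityMeasure_map hu.aemeasurable
    simp [gaussE]
  have hE : ∀ a p, gaussE S hS (linP a * p) = gaussE S hS (dirD (S *ᵥ a) p) := by
    intro a p
    simp only [gaussE, LinearMap.coe_mk, AddHom.coe_mk]
    rw [gauss_integral S hS, gauss_integral S hS, stein S hS]
  have htr : ∀ p, ∫ ω, MvPolynomial.eval (u ω) p ∂P = gaussE S hS p := by
    intro p
    simp only [gaussE, LinearMap.coe_mk, AddHom.coe_mk]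
    rw [← hlaw, integral_map hu.aemeasurable
      (MvPolynomial.continuous_eval p).aestronglyMeasurable]
  have hq : ∀ j, ∫ ω', u ω' ⬝ᵥ (A j *ᵥ u ω') ∂P = gaussE S hS (quadP (A j)) := by
    intro j
    rw [← htr]
    simp only [eval_quad]
  rw [hSw, hSW, ← E_final (gaussE S hS) S hE1 hE hSs lam A hA, ← htr]
  simp only [hq, map_pow, map_sum, map_mul, map_sub, eval_lin, eval_quad, MvPolynomial.eval_C]
end

section
/- Fix w ≥ 1 and positive integers n₁, …, n_{w+1}, and let S_{w+1} = {0,1}^{w+1}. For i = (i₁, …, i_{w+1}) ∈ S_{w+1} let K_i = ⊗_{l=1}^{w+1} J_{n_l}^{i_l} (Kronecker product), where J_n^0 = I_n and J_n^1 = J_n is the n×n all-ones matrix; let n = ∏_{l=1}^{w+1} n_l and r_i = ∏_{l : i_l = 0} n_l (so n/r_i = ∏_{l : i_l = 1} n_l). Let S ⊆ S_{w+1}, let σ₀ > 0 and σ_k ≥ 0 for k ∈ S, and set Σ = σ₀ I_n + ∑_{k ∈ S} σ_k K_k. Then Σ is invertible and Σ⁻¹ = ∑_{i ∈ S_{w+1}}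 τ_i K_i, where for each i ∈ S_{w+1}, τ_i = (r_i / n) · ∑_{j ∈ S_{w+1}, j ≤ i} (−1)^{|{l : i_l = 1, j_l = 0}|} / (σ₀ + ∑_{k ∈ S, k ≤ j} σ_k (n / r_k)). Here, for i, j ∈ S_{w+1}, j ≤ i means j_l ≤ i_l for all l = 1, …, w+1, and |·| denotes cardinality of a set of indices l. -/
open Matrix

/-- The Kronecker-product basis matrix `K_i = ⊗_l J_{n_l}^{i_l}`, realized as a matrix
indexed by the product of the factor level sets: its `(a,b)` entry is
`∏_l J^{i_l}(a_l, b_l)` where `J^1` is the all-ones matrix and `J^0` the identity. -/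
noncomputable def Kmat (w : ℕ) (n : Fin (w + 1) → ℕ) (i : Fin (w + 1) → Bool) :
    Matrix ((l : Fin (w + 1)) → Fin (n l)) ((l : Fin (w + 1)) → Fin (n l)) ℝ :=
  Matrix.of fun a b => ∏ l, if i l then (1 : ℝ) else (if a l = b l then 1 else 0)

/-- `r_i = ∏_{l : i_l = 0} n_l`. -/
def rprod (w : ℕ) (n : Fin (w + 1) → ℕ) (i : Fin (w + 1) → Bool) : ℕ :=
  ∏ l ∈ Finset.univ.filter (fun l => i l = false), n l

/-- `n = ∏_l n_l`. -/
def Ntot (w : ℕ) (n : Fin (w + 1) → ℕ) : ℕ := ∏ l, n l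

/-- The coefficient `τ_i` of `K_i` in the expansion of `Σ⁻¹` (Lemma 3.2). -/
noncomputable def tau (w : ℕ) (n : Fin (w + 1) → ℕ) (S : Finset (Fin (w + 1) → Bool))
    (σ₀ : ℝ) (σ : (Fin (w + 1) → Bool) → ℝ) (i : Fin (w + 1) → Bool) : ℝ :=
  ((rprod w n i : ℝ) / (Ntot w n : ℝ)) *
    ∑ j ∈ Finset.univ.filter (fun j : Fin (w + 1) → Bool => ∀ l, j l ≤ i l),
      ((-1 : ℝ) ^ (Finset.univ.filter (fun l => i l = true ∧ j l = false)).card /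
        (σ₀ + ∑ k ∈ S.filter (fun k => ∀ l, k l ≤ j l),
          σ k * ((Ntot w n : ℝ) / (rprod w n k : ℝ))))

/-- Orthogonal projections onto the common eigenspaces. -/
noncomputable def Emat (w : ℕ) (n : Fin (w + 1) → ℕ) (j : Fin (w + 1) → Bool) :
    Matrix ((l : Fin (w + 1)) → Fin (n l)) ((l : Fin (w + 1)) → Fin (n l)) ℝ :=
  Matrix.of fun a b => ∏ l, if j l then (n l : ℝ)⁻¹ else ((if a l = b l then 1 else 0) - (n l : ℝ)⁻¹)

lemma ratio_eq (w : ℕ) (n : Fin (w + 1) → ℕ) (hn : ∀ l, 0 < n l) (k : Fin (w + 1) → Bool) :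
    (Ntot w n : ℝ) / (rprod w n k : ℝ) = ∏ l, if k l then (n l : ℝ) else 1 := by
  have h : (rprod w n k : ℝ) ≠ 0 := by
    unfold rprod
    exact_mod_cast Finset.prod_ne_zero_iff.2 fun l _ => (hn l).ne'
  rw [div_eq_iff h]
  unfold Ntot rprod
  push_cast
  rw [Finset.prod_filter, ← Finset.prod_mul_distrib]
  refine Finset.prod_congr rfl fun l _ => ?_
  cases k l <;> simp

lemma sum_E (w : ℕ) (n : Fin (w + 1) → ℕ) : ∑ j, Emat w n j = 1 := by
  ext a b
  have := Finset.prod_univ_sum (fun _ : Fin (w+1) => (Finset.univ : Finset Bool))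
    (fun l x => if x then (n l : ℝ)⁻¹ else ((if a l = b l then 1 else 0) - (n l : ℝ)⁻¹))
  rw [Fintype.piFinset_univ] at this
  simp only [Matrix.sum_apply, Emat, Matrix.of_apply]
  rw [← this]
  simp only [Fintype.sum_bool, if_true, Bool.false_eq_true, if_false, add_sub_cancel]
  rw [Matrix.one_apply, Finset.prod_ite_zero]
  simp [funext_iff]

lemma K_mul_E (w : ℕ) (n : Fin (w + 1) → ℕ) (hn : ∀ l, 0 < n l) (k j : Fin (w + 1) → Bool) :
    Kmat w n k * Emat w n j =
      (if ∀ l, k l ≤ j l then (Ntot w n : ℝ) / (rprod w n k : ℝ) else 0) • Emat w n j := by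
  have hc : (if ∀ l, k l ≤ j l then (Ntot w n : ℝ) / (rprod w n k : ℝ) else 0)
      = ∏ l, if k l ≤ j l then (if k l then (n l : ℝ) else 1) else 0 := by
    rw [ratio_eq w n hn, Finset.prod_ite_zero]
    simp
  rw [hc]
  ext a b
  simp only [Matrix.mul_apply, Matrix.smul_apply, Kmat, Emat, Matrix.of_apply, smul_eq_mul]
  simp only [← Finset.prod_mul_distrib]
  have := Finset.prod_univ_sum (fun l : Fin (w+1) => (Finset.univ : Finset (Fin (n l))))
    (fun l x => (if k l then (1 : ℝ) else (if a l = x then 1 else 0)) *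
      (if j l then (n l : ℝ)⁻¹ else ((if x = b l then 1 else 0) - (n l : ℝ)⁻¹)))
  rw [Fintype.piFinset_univ] at this
  rw [← this]
  refine Finset.prod_congr rfl fun l _ => ?_
  have h0 : (n l : ℝ) ≠ 0 := by exact_mod_cast (hn l).ne'
  cases k l <;> cases j l <;> simp [h0]

lemma E_eq (w : ℕ) (n : Fin (w + 1) → ℕ) (hn : ∀ l, 0 < n l) (j : Fin (w + 1) → Bool) :
    Emat w n j = ∑ i, (if ∀ l, j l ≤ i l then
      ((rprod w n i : ℝ) / (Ntot w n : ℝ)) *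
      (-1 : ℝ) ^ (Finset.univ.filter (fun l => i l = true ∧ j l = false)).card else 0)
      • Kmat w n i := by
  have hc : ∀ i : Fin (w + 1) → Bool, (if ∀ l, j l ≤ i l then
      ((rprod w n i : ℝ) / (Ntot w n : ℝ)) *
      (-1 : ℝ) ^ (Finset.univ.filter (fun l => i l = true ∧ j l = false)).card else 0)
      = ∏ l, if j l ≤ i l then ((if i l then (n l : ℝ) else 1)⁻¹ *
          (if i l = true ∧ j l = false then (-1) else 1)) else 0 := by
    intro i
    have hs : (-1 : ℝ) ^ (Finset.univ.filter (fun l => i l = true ∧ j l = false)).card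
        = ∏ l, if i l = true ∧ j l = false then (-1) else 1 := by
      rw [← Finset.prod_filter, Finset.prod_const]
    rw [hs, Finset.prod_ite_zero, ← inv_div, ratio_eq w n hn, Finset.prod_mul_distrib,
      Finset.prod_inv_distrib]
    simp
  simp only [hc]
  ext a b
  simp only [Matrix.sum_apply, Matrix.smul_apply, Kmat, Emat, Matrix.of_apply, smul_eq_mul]
  simp only [← Finset.prod_mul_distrib]
  have := Finset.prod_univ_sum (fun l : Fin (w+1) => (Finset.univ : Finset Bool))
    (fun l x => (if j l ≤ x then ((if x then (n l : ℝ) else 1)⁻¹ *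
          (if x = true ∧ j l = false then (-1) else 1)) else 0) *
          (if x then (1 : ℝ) else (if a l = b l then 1 else 0)))
  rw [Fintype.piFinset_univ] at this
  rw [← this]
  refine Finset.prod_congr rfl fun l _ => ?_
  rw [Fintype.sum_bool]
  cases j l <;> simp
  ring

/-- Lemma 3.2: inversion of the covariance matrix of a balanced mixed ANOVA model.
`Σ = σ₀ I + ∑_{k ∈ S} σ_k K_k` is invertible and `Σ⁻¹ = ∑_{i ∈ S_{w+1}} τ_i K_i`. -/
theorem stmt4 (w : ℕ) (hw : 1 ≤ w) (n : Fin (w + 1) → ℕ) (hn : ∀ l, 0 < n l)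
    (S : Finset (Fin (w + 1) → Bool))
    (σ₀ : ℝ) (hσ₀ : 0 < σ₀)
    (σ : (Fin (w + 1) → Bool) → ℝ) (hσ : ∀ k ∈ S, 0 ≤ σ k)
    (Sig : Matrix ((l : Fin (w + 1)) → Fin (n l)) ((l : Fin (w + 1)) → Fin (n l)) ℝ)
    (hSig : Sig = σ₀ • (1 : Matrix _ _ ℝ) + ∑ k ∈ S, σ k • Kmat w n k) :
    IsUnit Sig ∧ Sig⁻¹ = ∑ i : Fin (w + 1) → Bool, tau w n S σ₀ σ i • Kmat w n i := by
  let lam : (Fin (w + 1) → Bool) → ℝ := fun j => σ₀ + ∑ k ∈ S.filter (fun k => ∀ l, k l ≤ j l),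
          σ k * ((Ntot w n : ℝ) / (rprod w n k : ℝ))
  have hlam : ∀ j, lam j ≠ 0 := by
    intro j
    refine (add_pos_of_pos_of_nonneg hσ₀ (Finset.sum_nonneg fun k hk => ?_)).ne'
    have := hσ k (Finset.mem_filter.1 hk).1
    positivity
  have hSE : ∀ j, Sig * Emat w n j = lam j • Emat w n j := by
    intro j
    rw [hSig, add_mul, Finset.sum_mul]
    simp only [smul_mul_assoc, one_mul, K_mul_E w n hn, smul_smul]
    rw [← Finset.sum_smul, ← add_smul]
    simp only [lam, Finset.sum_filter, mul_ite, mul_zero]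
  have htau : ∑ i : Fin (w + 1) → Bool, tau w n S σ₀ σ i • Kmat w n i
      = ∑ j, (lam j)⁻¹ • Emat w n j := by
    simp only [E_eq w n hn, Finset.smul_sum, smul_smul]
    rw [Finset.sum_comm]
    refine Finset.sum_congr rfl fun i _ => ?_
    rw [← Finset.sum_smul]
    congr 1
    rw [tau, Finset.mul_sum, Finset.sum_filter]
    refine Finset.sum_congr rfl fun j _ => ?_
    split_ifs
    · simp only [lam]; ring
    · simp
  have hmul : Sig * ∑ i : Fin (w + 1) → Bool, tau w n S σ₀ σ i • Kmat w n i = 1 := by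
    rw [htau, Finset.mul_sum, ← sum_E w n]
    refine Finset.sum_congr rfl fun j _ => ?_
    rw [mul_smul_comm, hSE, smul_smul, inv_mul_cancel₀ (hlam j), one_smul]
  exact ⟨IsUnit.of_mul_eq_one _ hmul, Matrix.inv_eq_right_inv hmul⟩
end

section
/- For every real g ≥ 2 there exists a constant c, depending only on g, such that for every positive integer n, every n×n symmetric real matrix Q, and ξ an n-dimensional random vector with the standard multivariate normal distribution N(0, I_n), one has E[|ξ′Qξ − E[ξ′Qξ]|^g] ≤ c · (‖Q‖₂)^g, where ‖Q‖₂ = (tr(Q′Q))^{1/2} is the Frobenius norm and E[ξ′Qξ] = tr(Q). -/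
open MeasureTheory Matrix Real

lemma aux_pi (n : ℕ) : mvGaussian n (1 : Matrix (Fin n) (Fin n) ℝ) =
    Measure.pi (fun _ : Fin n => ProbabilityTheory.gaussianReal 0 1) := by
  symm
  apply Measure.pi_eq
  intro s hs
  have hd : ∀ x : Fin n → ℝ, ((2 * Real.pi) ^ (-(n : ℝ) / 2) *
      (1 : Matrix (Fin n) (Fin n) ℝ).det ^ (-(1 : ℝ) / 2) *
      Real.exp (-(x ⬝ᵥ ((1 : Matrix (Fin n) (Fin n) ℝ)⁻¹ *ᵥ x)) / 2)) =
      ∏ i, ProbabilityTheory.gaussianPDFReal 0 1 (x i) := by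
    intro x
    simp only [ProbabilityTheory.gaussianPDFReal, Finset.prod_mul_distrib, ← Real.exp_sum]
    simp only [det_one, one_rpow, mul_one, inv_one, one_mulVec, NNReal.coe_one, sub_zero,
      Finset.prod_const, Finset.card_univ, Fintype.card_fin]
    congr 1
    · rw [sqrt_eq_rpow, ← rpow_neg (by positivity), ← rpow_natCast, ← rpow_mul (by positivity)]
      congr 1
      ring
    · congr 1
      rw [← Finset.sum_div, Finset.sum_neg_distrib, dotProduct]
      simp [pow_two]
  have hms : MeasurableSet (Set.univ.pi s) := MeasurableSet.univ_pi hs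
  unfold mvGaussian
  simp_rw [hd]
  rw [withDensity_apply _ hms]
  have hint : Integrable (fun x : Fin n → ℝ =>
      ∏ i, ProbabilityTheory.gaussianPDFReal 0 1 (x i)) :=
    Integrable.fintype_prod (f := fun _ => ProbabilityTheory.gaussianPDFReal 0 1)
      (fun i => ProbabilityTheory.integrable_gaussianPDFReal 0 1)
  rw [← ofReal_integral_eq_lintegral_ofReal hint.integrableOn
    (Filter.Eventually.of_forall fun x => Finset.prod_nonneg fun i _ =>
      ProbabilityTheory.gaussianPDFReal_nonneg _ _ _)]
  simp_rw [ProbabilityTheory.gaussianReal_apply_eq_integral 0 one_ne_zero]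
  rw [← ENNReal.ofReal_prod_of_nonneg (fun i _ => integral_nonneg fun x =>
      ProbabilityTheory.gaussianPDFReal_nonneg _ _ _)]
  congr 1
  simp_rw [← integral_indicator (hs _)]
  rw [← integral_indicator hms, ← integral_fintype_prod_volume_eq_prod]
  congr 1
  ext x
  by_cases hx : x ∈ Set.univ.pi s
  · rw [Set.indicator_of_mem hx]
    refine Finset.prod_congr rfl fun i _ => ?_
    rw [Set.indicator_of_mem (hx i trivial)]
  · rw [Set.indicator_of_notMem hx]
    simp only [Set.mem_univ_pi, not_forall] at hx
    obtain ⟨i, hi⟩ := hx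
    symm
    exact Finset.prod_eq_zero (Finset.mem_univ i) (Set.indicator_of_notMem hi _)

lemma aux_scalar (s : ℝ) (hs : |s| ≤ 1 / 4) : √(1 / (1 - 2 * s)) ≤ exp (s + 2 * s ^ 2) := by
  obtain ⟨h1, h2⟩ := abs_le.1 hs
  rw [Real.sqrt_le_left (exp_pos _).le, ← Real.exp_nat_mul, div_le_iff₀ (by linarith)]
  have key : 1 ≤ exp (2 * s + (2 * s) ^ 2) * (1 - 2 * s) := by
    rcases le_total 0 s with h | h
    · have := quadratic_le_exp_of_nonneg (x := 2 * s + (2 * s) ^ 2) (by positivity)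
      have h3 := mul_le_mul_of_nonneg_right this (by linarith : (0:ℝ) ≤ 1 - 2 * s)
      refine le_trans ?_ h3
      obtain ⟨u, rfl⟩ : ∃ u, s = u / 2 := ⟨2 * s, by ring⟩
      have hu : 0 ≤ u := by linarith
      have hu' : u ≤ 1 / 2 := by linarith
      have e : (1 + (2 * (u/2) + (2 * (u/2)) ^ 2) + (2 * (u/2) + (2 * (u/2)) ^ 2) ^ 2 / 2) * (1 - 2 * (u/2))
        - 1 = u ^ 2 * ((1 + u) * (1 / 2 - u)) + (1 - u) * u ^ 4 / 2 := by ring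
      have : 0 ≤ u ^ 2 * ((1 + u) * (1 / 2 - u)) :=
        mul_nonneg (by positivity) (mul_nonneg (by linarith) (by linarith))
      have : 0 ≤ (1 - u) * u ^ 4 / 2 := by
        have : 0 ≤ 1 - u := by linarith
        positivity
      linarith
    · have := add_one_le_exp (2 * s + (2 * s) ^ 2)
      have h3 := mul_le_mul_of_nonneg_right this (by linarith : (0:ℝ) ≤ 1 - 2 * s)
      refine le_trans ?_ h3
      nlinarith [mul_nonneg (sq_nonneg s) (neg_nonneg.2 h)]
  have e : ((2 : ℕ) : ℝ) * (s + 2 * s ^ 2) = 2 * s + (2 * s) ^ 2 := by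
    push_cast
    ring
  rw [e]
  exact key

lemma aux_smul (s : ℝ) (x : ℝ) : ProbabilityTheory.gaussianPDFReal 0 1 x • exp (s * (x ^ 2 - 1)) =
    ((√(2 * π))⁻¹ * exp (-s)) * exp (-(1 / 2 - s) * x ^ 2) := by
  simp only [ProbabilityTheory.gaussianPDFReal, smul_eq_mul, NNReal.coe_one, mul_one, sub_zero]
  rw [mul_assoc, mul_assoc, ← exp_add, ← exp_add]
  congr 2
  ring

lemma aux_int (s : ℝ) (hs : |s| ≤ 1 / 4) :
    Integrable (fun x : ℝ => exp (s * (x ^ 2 - 1))) (ProbabilityTheory.gaussianReal 0 1) := by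
  obtain ⟨h1, h2⟩ := abs_le.1 hs
  rw [ProbabilityTheory.gaussianReal_of_var_ne_zero _ one_ne_zero,
    integrable_withDensity_iff_integrable_smul' (ProbabilityTheory.measurable_gaussianPDF 0 1)
    (Filter.Eventually.of_forall fun x => ProbabilityTheory.gaussianPDF_lt_top)]
  simp_rw [ProbabilityTheory.toReal_gaussianPDF, aux_smul]
  exact (integrable_exp_neg_mul_sq (by linarith)).const_mul _

lemma aux_mgf (s : ℝ) (hs : |s| ≤ 1 / 4) :
    ∫ x : ℝ, exp (s * (x ^ 2 - 1)) ∂(ProbabilityTheory.gaussianReal 0 1) ≤ exp (2 * s ^ 2) := by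
  obtain ⟨h1, h2⟩ := abs_le.1 hs
  rw [ProbabilityTheory.integral_gaussianReal_eq_integral_smul one_ne_zero]
  simp_rw [aux_smul]
  rw [integral_const_mul, integral_gaussian]
  have e : √(π / (1 / 2 - s)) = √(2 * π) * √(1 / (1 - 2 * s)) := by
    rw [← Real.sqrt_mul (by positivity)]
    congr 1
    have : 1 - 2 * s ≠ 0 := by linarith
    have : 1 / 2 - s ≠ 0 := by linarith
    field_simp
    try ring
  rw [e]
  have hp : √(2 * π) ≠ 0 := by positivity
  calc _ = exp (-s) * √(1 / (1 - 2 * s)) := by field_simp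
    _ ≤ exp (-s) * exp (s + 2 * s ^ 2) := by gcongr; exact aux_scalar s hs
    _ = _ := by rw [← exp_add]; congr 1; ring

lemma aux_pimgf {n : ℕ} (l : Fin n → ℝ) (hl : ∑ i, l i ^ 2 = 1 / 16) :
    Integrable (fun x : Fin n → ℝ => exp (∑ i, l i * (x i ^ 2 - 1)))
      (Measure.pi fun _ => ProbabilityTheory.gaussianReal 0 1) ∧
    ∫ x : Fin n → ℝ, exp (∑ i, l i * (x i ^ 2 - 1))
      ∂(Measure.pi fun _ => ProbabilityTheory.gaussianReal 0 1) ≤ exp 1 := by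
  have hle : ∀ i, |l i| ≤ 1 / 4 := by
    intro i
    apply abs_le_of_sq_le_sq _ (by norm_num)
    have := Finset.single_le_sum (f := fun i => l i ^ 2) (fun i _ => sq_nonneg _) (Finset.mem_univ i)
    linarith
  simp_rw [exp_sum]
  refine ⟨Integrable.fintype_prod (f := fun i x => exp (l i * (x ^ 2 - 1))) fun i => aux_int _ (hle i), ?_⟩
  rw [integral_fintype_prod_eq_prod (f := fun i x => exp (l i * (x ^ 2 - 1)))]
  calc _ ≤ ∏ i, exp (2 * l i ^ 2) := Finset.prod_le_prod
        (fun i _ => integral_nonneg fun x => (exp_pos _).le) (fun i _ => aux_mgf _ (hle i))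
    _ ≤ _ := by
      rw [← exp_sum, ← Finset.mul_sum, hl]
      apply exp_le_exp.2
      norm_num

lemma aux_pow (g : ℝ) (hg : 2 ≤ g) (x : ℝ) : |x| ^ g ≤ g ^ g * (exp x + exp (-x)) := by
  have h0 : 0 < g := by linarith
  have h1 : |x| / g ≤ exp (|x| / g) := by linarith [add_one_le_exp (|x| / g)]
  have h2 : (|x| / g) ^ g ≤ exp |x| := by
    refine (rpow_le_rpow (by positivity) h1 h0.le).trans ?_
    rw [← exp_mul, div_mul_cancel₀ _ h0.ne']
  rw [div_rpow (abs_nonneg _) h0.le, div_le_iff₀ (by positivity), mul_comm] at h2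
  refine h2.trans ?_
  gcongr
  rcases abs_cases x with ⟨h, _⟩ | ⟨h, _⟩ <;> rw [h]
  · linarith [exp_pos (-x)]
  · linarith [exp_pos x]

lemma aux_core (g : ℝ) (hg : 2 ≤ g) {n : ℕ} (l : Fin n → ℝ) (K : ℝ) (hK : 0 < K)
    (hl : ∑ i, l i ^ 2 = K ^ 2) :
    ∫ x : Fin n → ℝ, |∑ i, l i * (x i ^ 2 - 1)| ^ g
      ∂(Measure.pi fun _ => ProbabilityTheory.gaussianReal 0 1)
      ≤ (4 ^ g * (g ^ g * (exp 1 + exp 1))) * K ^ g := by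
  have h1 := aux_pimgf (fun i => l i / (4 * K)) (by
    simp_rw [div_pow]; rw [← Finset.sum_div, hl]; field_simp; norm_num)
  have h2 := aux_pimgf (fun i => - (l i / (4 * K))) (by
    simp_rw [neg_sq, div_pow]; rw [← Finset.sum_div, hl]; field_simp; norm_num)
  have hs1 : ∀ x : Fin n → ℝ, ∑ i, l i / (4 * K) * (x i ^ 2 - 1) =
      (∑ i, l i * (x i ^ 2 - 1)) / (4 * K) := by
    intro x; rw [Finset.sum_div]; refine Finset.sum_congr rfl fun i _ => by ring
  simp_rw [neg_mul, Finset.sum_neg_distrib] at h2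
  simp_rw [hs1] at h1 h2
  have hpt : ∀ x : Fin n → ℝ, |∑ i, l i * (x i ^ 2 - 1)| ^ g ≤
      ((4 * K) ^ g * g ^ g) * (exp ((∑ i, l i * (x i ^ 2 - 1)) / (4 * K)) +
        exp (-((∑ i, l i * (x i ^ 2 - 1)) / (4 * K)))) := by
    intro x
    have := aux_pow g hg ((∑ i, l i * (x i ^ 2 - 1)) / (4 * K))
    rw [abs_div, abs_of_pos (by positivity : 0 < 4 * K), div_rpow (abs_nonneg _) (by positivity),
      div_le_iff₀ (by positivity)] at this
    linarith
  refine (integral_mono_of_nonneg (Filter.Eventually.of_forall fun x => by positivity)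
    ((h1.1.add h2.1).const_mul ((4 * K) ^ g * g ^ g))
    (Filter.Eventually.of_forall hpt)).trans ?_
  simp only [Pi.add_apply]
  rw [integral_const_mul, integral_add h1.1 h2.1]
  have hg0 : 0 < g := by linarith
  calc _ ≤ (4 * K) ^ g * g ^ g * (exp 1 + exp 1) := by
        gcongr
        exacts [h1.2, h2.2]
    _ = _ := by rw [mul_rpow (by norm_num) hK.le]; ring

lemma aux_rot {n : ℕ} (b : OrthonormalBasis (Fin n) ℝ (EuclideanSpace ℝ (Fin n))) :
    Measure.pi (fun _ : Fin n => ProbabilityTheory.gaussianReal 0 1) =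
    (Measure.pi (fun _ : Fin n => ProbabilityTheory.gaussianReal 0 1)).map
      (fun x => WithLp.ofLp (∑ i, x i • b i)) := by
  have h1 := ProbabilityTheory.map_pi_eq_stdGaussian (ι := Fin n)
  rw [ProbabilityTheory.stdGaussian_eq_map_pi_orthonormalBasis b] at h1
  have h2 := congrArg (Measure.map (WithLp.ofLp)) h1
  rw [Measure.map_map (by fun_prop) (by fun_prop), Measure.map_map (by fun_prop) (by fun_prop)] at h2
  simpa [Function.comp_def] using h2

lemma aux_quad {n : ℕ} (Q : Matrix (Fin n) (Fin n) ℝ) (hQ : Q.IsHermitian) (x : Fin n → ℝ) :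
    (WithLp.ofLp (∑ i, x i • hQ.eigenvectorBasis i)) ⬝ᵥ
      (Q *ᵥ (WithLp.ofLp (∑ i, x i • hQ.eigenvectorBasis i))) =
    ∑ i, hQ.eigenvalues i * x i ^ 2 := by
  have h1 : Q *ᵥ (WithLp.ofLp (∑ i, x i • hQ.eigenvectorBasis i)) =
      WithLp.ofLp (∑ i, (x i * hQ.eigenvalues i) • hQ.eigenvectorBasis i) := by
    simp only [WithLp.ofLp_sum, WithLp.ofLp_smul, Matrix.mulVec_sum, Matrix.mulVec_smul,
      hQ.mulVec_eigenvectorBasis, smul_smul]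
  rw [h1]
  have h2 := hQ.eigenvectorBasis.orthonormal.inner_sum (fun i => x i * hQ.eigenvalues i) x Finset.univ
  rw [EuclideanSpace.inner_eq_star_dotProduct] at h2
  simp only [star_trivial] at h2
  rw [h2]
  refine Finset.sum_congr rfl fun i _ => ?_
  simp
  ring

lemma aux_trace {n : ℕ} (Q : Matrix (Fin n) (Fin n) ℝ) (hQ : Q.IsHermitian) :
    (Qᵀ * Q).trace = ∑ i, hQ.eigenvalues i ^ 2 := by
  have hT : Qᵀ = Q := by simpa [IsHermitian, conjTranspose_eq_transpose_of_trivial] using hQ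
  rw [hT]
  have := hQ.spectral_theorem
  have h2 : Q * Q = Unitary.conjStarAlgAut ℝ _ hQ.eigenvectorUnitary
      (diagonal (fun i => hQ.eigenvalues i ^ 2)) := by
    conv_lhs => rw [this]
    rw [← map_mul, diagonal_mul_diagonal]
    simp [pow_two]
  rw [h2, Unitary.conjStarAlgAut_apply, Matrix.trace_mul_cycle]
  simp [Matrix.trace_diagonal]

lemma aux_sq_int : Integrable (fun x : ℝ => x ^ 2) (ProbabilityTheory.gaussianReal 0 1) :=
  (ProbabilityTheory.memLp_id_gaussianReal (μ := 0) (v := 1) 2).integrable_sq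

lemma aux_sq : ∫ x : ℝ, x ^ 2 ∂(ProbabilityTheory.gaussianReal 0 1) = 1 := by
  have h := ProbabilityTheory.variance_fun_id_gaussianReal (μ := 0) (v := 1)
  rw [ProbabilityTheory.variance_eq_integral (by fun_prop)] at h
  simpa using h

/-- Lemma 5.1: for every `g ≥ 2` there is a constant `c` depending only on `g` such that
for every symmetric matrix `Q` and standard normal vector `ξ`,
`E|ξ′Qξ − E ξ′Qξ|^g ≤ c ‖Q‖₂^g`, where `‖Q‖₂` is the Frobenius norm. -/
theorem stmt5 : ∀ g : ℝ, 2 ≤ g → ∃ c : ℝ,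
    ∀ (n : ℕ) (Q : Matrix (Fin n) (Fin n) ℝ), Q.IsSymm →
      ∀ (Ω : Type) (_ : MeasurableSpace Ω) (P : Measure Ω), IsProbabilityMeasure P →
        ∀ (ξ : Ω → Fin n → ℝ), Measurable ξ →
          P.map ξ = mvGaussian n (1 : Matrix (Fin n) (Fin n) ℝ) →
          ∫ ω, |(ξ ω ⬝ᵥ (Q *ᵥ ξ ω)) - ∫ ω', ξ ω' ⬝ᵥ (Q *ᵥ ξ ω') ∂P| ^ g ∂P
            ≤ c * (Real.sqrt ((Qᵀ * Q).trace)) ^ g := by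
  intro g hg
  refine ⟨4 ^ g * (g ^ g * (exp 1 + exp 1)), ?_⟩
  intro n Q hQs Ω _ P _ ξ hξ hmap
  have hQ : Q.IsHermitian := by
    rw [IsHermitian, conjTranspose_eq_transpose_of_trivial]
    exact hQs
  rw [aux_pi, aux_rot hQ.eigenvectorBasis] at hmap
  have hq : Measurable (fun x : Fin n → ℝ => x ⬝ᵥ (Q *ᵥ x)) := by
    unfold dotProduct mulVec dotProduct
    fun_prop
  have htr : ∀ f : ℝ → ℝ, Measurable f → ∫ ω, f (ξ ω ⬝ᵥ (Q *ᵥ ξ ω)) ∂P =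
      ∫ x : Fin n → ℝ, f (∑ i, hQ.eigenvalues i * x i ^ 2)
        ∂(Measure.pi fun _ => ProbabilityTheory.gaussianReal 0 1) := by
    intro f hf
    have := integral_map (μ := P) hξ.aemeasurable
      (f := fun x : Fin n → ℝ => f (x ⬝ᵥ (Q *ᵥ x))) (hf.comp hq).aestronglyMeasurable
    rw [← this, hmap, integral_map (Measurable.aemeasurable (by fun_prop))
      (show AEStronglyMeasurable (fun x : Fin n → ℝ => f (x ⬝ᵥ (Q *ᵥ x))) _ from
        (hf.comp hq).aestronglyMeasurable)]
    simp_rw [aux_quad]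
  have hmean : ∫ ω', ξ ω' ⬝ᵥ (Q *ᵥ ξ ω') ∂P = ∑ i, hQ.eigenvalues i := by
    rw [htr (fun x => x) measurable_id, integral_finsetSum]
    · refine Finset.sum_congr rfl fun i _ => ?_
      rw [integral_const_mul, integral_comp_eval (μ := fun _ : Fin n => ProbabilityTheory.gaussianReal 0 1)
        (f := fun x : ℝ => x ^ 2) aux_sq_int.aestronglyMeasurable, aux_sq, mul_one]
    · intro i _
      exact (integrable_comp_eval (μ := fun _ : Fin n => ProbabilityTheory.gaussianReal 0 1)
        (f := fun x : ℝ => x ^ 2) aux_sq_int).const_mul _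
  rw [hmean, htr (fun y => |y - ∑ i, hQ.eigenvalues i| ^ g) (by fun_prop), aux_trace Q hQ]
  have hX : ∀ x : Fin n → ℝ, ∑ i, hQ.eigenvalues i * x i ^ 2 - ∑ i, hQ.eigenvalues i =
      ∑ i, hQ.eigenvalues i * (x i ^ 2 - 1) := by
    intro x
    rw [← Finset.sum_sub_distrib]
    refine Finset.sum_congr rfl fun i _ => by ring
  simp_rw [hX]
  have hnn : 0 ≤ ∑ i, hQ.eigenvalues i ^ 2 := Finset.sum_nonneg fun i _ => sq_nonneg _
  rcases hnn.eq_or_lt with h | h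
  · have h0 : ∀ i, hQ.eigenvalues i = 0 := by
      intro i
      have := (Finset.sum_eq_zero_iff_of_nonneg (fun i _ => sq_nonneg (hQ.eigenvalues i))).1 h.symm i
        (Finset.mem_univ i)
      exact pow_eq_zero_iff (two_ne_zero) |>.1 this
    have hg0 : g ≠ 0 := by linarith
    simp [h0, zero_rpow hg0]
  · exact aux_core g hg _ _ (Real.sqrt_pos.2 h) (Real.sq_sqrt hnn).symm
end

section
/- Let a₁, …, a_s and b₁, …, b_s be real numbers and δ₁, …, δ_s ≥ 0 be such that a_i ≤ b_i + Δ_a for all 1 ≤ i ≤ s, where Δ_a = ∑_{j=1}^{s} δ_j a_j. If Δ = ∑_{j=1}^{s} δ_j < 1, then a_i ≤ b_i + (1 − Δ)^{-1} Δ_b for all 1 ≤ i ≤ s, where Δ_b = ∑_{j=1}^{s} δ_j b_j. -/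
/-- Lemma 5.3: if `a_i ≤ b_i + Δ_a` for all `i`, where `Δ_a = ∑_j δ_j a_j` with `δ_j ≥ 0`,
and `Δ = ∑_j δ_j < 1`, then `a_i ≤ b_i + (1 − Δ)⁻¹ Δ_b` for all `i`,
where `Δ_b = ∑_j δ_j b_j`. -/
theorem stmt7 {s : ℕ} (a b δ : Fin s → ℝ) (hδ : ∀ j, 0 ≤ δ j)
    (h : ∀ i, a i ≤ b i + ∑ j, δ j * a j) (hΔ : ∑ j, δ j < 1) :
    ∀ i, a i ≤ b i + (1 - ∑ j, δ j)⁻¹ * ∑ j, δ j * b j := by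
  intro i
  have h1 : ∑ j, δ j * a j ≤ ∑ j, (δ j * b j + δ j * ∑ k, δ k * a k) :=
    Finset.sum_le_sum fun j _ => by
      rw [← mul_add]
      exact mul_le_mul_of_nonneg_left (h j) (hδ j)
  rw [Finset.sum_add_distrib, ← Finset.sum_mul] at h1
  have h2 : ∑ j, δ j * a j ≤ (1 - ∑ j, δ j)⁻¹ * ∑ j, δ j * b j := by
    rw [le_inv_mul_iff₀ (by linarith)]
    linarith
  linarith [h i]
end

section
/- Let Σ be an n×n positive definite real matrix, let X be an n×p real matrix of full column rank p < n, and let T be an n×(n−p) real matrix of full column rank n−p with T′X = 0. Then T′ΣT and X′Σ⁻¹X are invertible and T(T′ΣT)⁻¹T′ = Σ⁻¹ − Σ⁻¹X(X′Σ⁻¹X)⁻¹X′Σ⁻¹. -/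
open Matrix

lemma aux_inj {n k : ℕ} (A : Matrix (Fin n) (Fin k) ℝ) (h : A.rank = k) :
    Function.Injective A.mulVec := by
  have h1 := LinearMap.finrank_range_add_finrank_ker A.mulVecLin
  rw [← Matrix.rank, h, Module.finrank_fin_fun] at h1
  have h2 : Module.finrank ℝ (LinearMap.ker A.mulVecLin) = 0 := by omega
  have h3 := Submodule.finrank_eq_zero.mp h2
  exact LinearMap.ker_eq_bot.mp h3

/-- Identity (2.6): for `Σ` positive definite, `X` of full column rank `p < n` and `T` of
full column rank `n − p` with `T′X = 0`, the matrices `T′ΣT` and `X′Σ⁻¹X` are invertible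
and `T(T′ΣT)⁻¹T′ = Σ⁻¹ − Σ⁻¹X(X′Σ⁻¹X)⁻¹X′Σ⁻¹`. -/
theorem stmt10 {n p : ℕ} (hpn : p < n)
    (Sig : Matrix (Fin n) (Fin n) ℝ) (hSig : Sig.PosDef)
    (X : Matrix (Fin n) (Fin p) ℝ) (hX : X.rank = p)
    (T : Matrix (Fin n) (Fin (n - p)) ℝ) (hT : T.rank = n - p)
    (hTX : Tᵀ * X = 0) :
    IsUnit (Tᵀ * Sig * T) ∧ IsUnit (Xᵀ * Sig⁻¹ * X) ∧
      T * (Tᵀ * Sig * T)⁻¹ * Tᵀ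
        = Sig⁻¹ - Sig⁻¹ * X * (Xᵀ * Sig⁻¹ * X)⁻¹ * Xᵀ * Sig⁻¹ := by
  have hM : IsUnit (Tᵀ * Sig * T) := by
    have := (hSig.conjTranspose_mul_mul_same (aux_inj T hT)).isUnit
    rwa [conjTranspose_eq_transpose_of_trivial] at this
  have hG : IsUnit (Xᵀ * Sig⁻¹ * X) := by
    have := (hSig.inv.conjTranspose_mul_mul_same (aux_inj X hX)).isUnit
    rwa [conjTranspose_eq_transpose_of_trivial] at this
  refine ⟨hM, hG, ?_⟩
  have hS := (isUnit_iff_isUnit_det _).mp hSig.isUnit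
  have hMd := (isUnit_iff_isUnit_det _).mp hM
  have hGd := (isUnit_iff_isUnit_det _).mp hG
  have hXT : Xᵀ * T = 0 := by
    have := congrArg transpose hTX
    simpa using this
  set M := Tᵀ * Sig * T with hMdef
  set G := Xᵀ * Sig⁻¹ * X with hGdef
  have h1 : fromRows (M⁻¹ * Tᵀ) (G⁻¹ * Xᵀ * Sig⁻¹) * fromCols (Sig * T) X = 1 := by
    rw [fromRows_mul_fromCols, ← fromBlocks_one]
    congr 1
    · rw [Matrix.mul_assoc, ← Matrix.mul_assoc Tᵀ, ← hMdef, nonsing_inv_mul _ hMd]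
    · rw [Matrix.mul_assoc, hTX, Matrix.mul_zero]
    · rw [Matrix.mul_assoc, nonsing_inv_mul_cancel_left _ _ hS, Matrix.mul_assoc, hXT,
        Matrix.mul_zero]
    · rw [Matrix.mul_assoc, Matrix.mul_assoc, ← Matrix.mul_assoc Xᵀ, ← hGdef,
        nonsing_inv_mul _ hGd]
  have e : Fin (n - p) ⊕ Fin p ≃ Fin n :=
    finSumFinEquiv.trans (finCongr (by omega))
  have h2 := (mul_eq_one_comm_of_equiv e).mp h1
  rw [fromCols_mul_fromRows] at h2
  have h3 := congrArg (Sig⁻¹ * ·) h2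
  simp only [Matrix.mul_add, Matrix.mul_one] at h3
  rw [Matrix.mul_assoc Sig, nonsing_inv_mul_cancel_left _ _ hS] at h3
  rw [eq_sub_iff_add_eq]
  refine Eq.trans ?_ h3
  simp only [Matrix.mul_assoc]
end

section
/- Let Σ be an n×n positive definite real matrix and X an n×p real matrix of full column rank p < n such that X′X = (n/p)I_p and Σ(XX′) = (XX′)Σ. Then X′Σ⁻¹X is invertible and Σ⁻¹ − Σ⁻¹X(X′Σ⁻¹X)⁻¹X′Σ⁻¹ = (I_n − (p/n)XX′)Σ⁻¹. -/
open Matrix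

/-- Identity (5.6): if `Σ` is positive definite, `X` has full column rank `p < n`,
`X′X = (n/p) I_p` and `Σ` commutes with `XX′`, then `X′Σ⁻¹X` is invertible and
`Σ⁻¹ − Σ⁻¹X(X′Σ⁻¹X)⁻¹X′Σ⁻¹ = (I − (p/n) XX′) Σ⁻¹`. -/
theorem stmt11 {n p : ℕ} (hpn : p < n)
    (Sig : Matrix (Fin n) (Fin n) ℝ) (hSig : Sig.PosDef)
    (X : Matrix (Fin n) (Fin p) ℝ) (hX : X.rank = p)
    (hXX : Xᵀ * X = ((n : ℝ) / (p : ℝ)) • (1 : Matrix (Fin p) (Fin p) ℝ))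
    (hcomm : Sig * (X * Xᵀ) = (X * Xᵀ) * Sig) :
    IsUnit (Xᵀ * Sig⁻¹ * X) ∧
      Sig⁻¹ - Sig⁻¹ * X * (Xᵀ * Sig⁻¹ * X)⁻¹ * Xᵀ * Sig⁻¹
        = ((1 : Matrix (Fin n) (Fin n) ℝ) - ((p : ℝ) / (n : ℝ)) • (X * Xᵀ)) * Sig⁻¹ := by
  have hS : IsUnit Sig.det := (Matrix.isUnit_iff_isUnit_det _).mp hSig.isUnit
  have h1 : Sig⁻¹ * Sig = 1 := Matrix.nonsing_inv_mul _ hS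
  have hn : (n : ℝ) ≠ 0 := by
    have : n ≠ 0 := by omega
    exact_mod_cast this
  rcases Nat.eq_zero_or_pos p with hp0 | hp0
  · subst hp0
    refine ⟨isUnit_of_subsingleton _, ?_⟩
    have hX0 : X = 0 := by
      ext i j
      exact j.elim0
    simp [hX0]
  have hp : (p : ℝ) ≠ 0 := by
    have : p ≠ 0 := by omega
    exact_mod_cast this
  have hAB : (Xᵀ * Sig⁻¹ * X) * (((p : ℝ) / n) ^ 2 • (Xᵀ * Sig * X)) = 1 := by
    have e : (Xᵀ * Sig⁻¹ * X) * (Xᵀ * Sig * X) = (Xᵀ * X) * (Xᵀ * X) := by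
      calc (Xᵀ * Sig⁻¹ * X) * (Xᵀ * Sig * X)
          = Xᵀ * Sig⁻¹ * ((X * Xᵀ) * Sig) * X := by simp only [Matrix.mul_assoc]
        _ = Xᵀ * (Sig⁻¹ * Sig) * (X * Xᵀ) * X := by
            rw [← hcomm]; simp only [Matrix.mul_assoc]
        _ = _ := by rw [h1, Matrix.mul_one]; simp only [Matrix.mul_assoc]
    rw [Matrix.mul_smul, e, hXX, Matrix.smul_mul, Matrix.one_mul, smul_smul, smul_smul]
    have : ((p : ℝ) / n) ^ 2 * ((n : ℝ) / p * ((n : ℝ) / p)) = 1 := by field_simp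
    rw [← mul_assoc] at this
    rw [this, one_smul]
  refine ⟨IsUnit.of_mul_eq_one _ hAB, ?_⟩
  rw [Matrix.inv_eq_right_inv hAB, Matrix.sub_mul, Matrix.one_mul]
  congr 1
  have e : Sig⁻¹ * X * (Xᵀ * Sig * X) * Xᵀ = ((n : ℝ) / p) • (X * Xᵀ) := by
    calc Sig⁻¹ * X * (Xᵀ * Sig * X) * Xᵀ
        = Sig⁻¹ * ((X * Xᵀ) * Sig) * X * Xᵀ := by simp only [Matrix.mul_assoc]
      _ = (Sig⁻¹ * Sig) * X * (Xᵀ * X) * Xᵀ := by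
          rw [← hcomm]; simp only [Matrix.mul_assoc]
      _ = _ := by
          rw [h1, hXX, Matrix.one_mul, Matrix.mul_smul, Matrix.mul_one, Matrix.smul_mul]
  rw [Matrix.mul_smul, Matrix.smul_mul, e, smul_smul]
  congr 2
  field_simp
end

section
/- Let V₀ = I_n and V₁, …, V_q be n×n positive semidefinite real matrices, let σ₀ > 0 and σ₁, …, σ_q ≥ 0, and set Σ = ∑_{j=0}^{q} σ_j V_j. Let X be an n×p real matrix of full column rank p, and set P = Σ⁻¹ − Σ⁻¹X(X′Σ⁻¹X)⁻¹X′Σ⁻¹. Then for every index i ∈ {0, 1, …, q} with σ_i > 0, |tr(Σ⁻¹V_i) − tr(PV_i)| ≤ p/σ_i. -/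
open Matrix

/-- The covariance matrix `Σ = ∑_{j=0}^{q} σ_j V_j` of a mixed ANOVA model. -/
noncomputable def SigM {n q : ℕ} (V : Fin (q + 1) → Matrix (Fin n) (Fin n) ℝ)
    (σ : Fin (q + 1) → ℝ) : Matrix (Fin n) (Fin n) ℝ :=
  ∑ j, σ j • V j

/-- The REML projection matrix `P = Σ⁻¹ − Σ⁻¹X(X′Σ⁻¹X)⁻¹X′Σ⁻¹`. -/
noncomputable def Pmat {n p q : ℕ} (V : Fin (q + 1) → Matrix (Fin n) (Fin n) ℝ)
    (σ : Fin (q + 1) → ℝ) (X : Matrix (Fin n) (Fin p) ℝ) : Matrix (Fin n) (Fin n) ℝ :=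
  (SigM V σ)⁻¹ - (SigM V σ)⁻¹ * X * (Xᵀ * (SigM V σ)⁻¹ * X)⁻¹ * Xᵀ * (SigM V σ)⁻¹

theorem aux_trace_nonneg {n : ℕ} {Q W : Matrix (Fin n) (Fin n) ℝ} (hQ : Q.PosSemidef)
    (hW : W.PosSemidef) : 0 ≤ (Q * W).trace := by
  open scoped MatrixOrder in
  obtain ⟨B, rfl⟩ := CStarAlgebra.nonneg_iff_eq_star_mul_self.mp hQ.nonneg
  rw [Matrix.star_eq_conjTranspose]
  rw [Matrix.mul_assoc, Matrix.trace_mul_comm]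
  exact (hW.mul_mul_conjTranspose_same B).trace_nonneg

theorem aux_inj_s12 {n p : ℕ} (X : Matrix (Fin n) (Fin p) ℝ) (hX : X.rank = p) :
    Function.Injective X.mulVec := by
  rw [Matrix.mulVec_injective_iff, linearIndependent_iff_card_eq_finrank_span]
  rw [Matrix.rank_eq_finrank_span_cols] at hX
  simp [Set.finrank, hX]

theorem stmt12 {n p q : ℕ}
    (V : Fin (q + 1) → Matrix (Fin n) (Fin n) ℝ)
    (hV0 : V 0 = 1) (hV : ∀ j, (V j).PosSemidef)
    (σ : Fin (q + 1) → ℝ) (hσ0 : 0 < σ 0) (hσ : ∀ j, 0 ≤ σ j)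
    (X : Matrix (Fin n) (Fin p) ℝ) (hX : X.rank = p)
    (i : Fin (q + 1)) (hi : 0 < σ i) :
    |((SigM V σ)⁻¹ * V i).trace - (Pmat V σ X * V i).trace| ≤ (p : ℝ) / σ i := by
  have hS : (SigM V σ).PosDef := by
    unfold SigM
    rw [Fin.sum_univ_succ, hV0]
    refine Matrix.PosDef.add_posSemidef (Matrix.PosDef.one.smul hσ0) ?_
    exact Matrix.posSemidef_sum _ fun j _ => (hV _).smul (hσ _)
  have hSum : SigM V σ = ∑ j, σ j • V j := rfl
  unfold Pmat
  generalize SigM V σ = S at *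
  have hA : S⁻¹.PosDef := hS.inv
  have hAS : S⁻¹ * S = 1 := Matrix.nonsing_inv_mul _ ((Matrix.isUnit_iff_isUnit_det _).mp hS.isUnit)
  have hM : (Xᵀ * S⁻¹ * X).PosDef := by
    have := hA.conjTranspose_mul_mul_same (aux_inj_s12 X hX)
    rwa [Matrix.conjTranspose_eq_transpose_of_trivial] at this
  have hMM : (Xᵀ * S⁻¹ * X) * (Xᵀ * S⁻¹ * X)⁻¹ = 1 :=
    Matrix.mul_nonsing_inv _ ((Matrix.isUnit_iff_isUnit_det _).mp hM.isUnit)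
  have hAt : S⁻¹ᵀ = S⁻¹ := by
    have := hA.isHermitian.eq
    rwa [Matrix.conjTranspose_eq_transpose_of_trivial] at this
  have hQ : (S⁻¹ * X * (Xᵀ * S⁻¹ * X)⁻¹ * Xᵀ * S⁻¹).PosSemidef := by
    have := hM.inv.posSemidef.mul_mul_conjTranspose_same (S⁻¹ * X)
    rwa [Matrix.conjTranspose_eq_transpose_of_trivial, Matrix.transpose_mul, hAt,
      ← Matrix.mul_assoc] at this
  have htr : (S⁻¹ * X * (Xᵀ * S⁻¹ * X)⁻¹ * Xᵀ * S⁻¹ * S).trace = p := by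
    rw [Matrix.mul_assoc _ S⁻¹ S, hAS, Matrix.mul_one, Matrix.trace_mul_comm,
      ← Matrix.mul_assoc, ← Matrix.mul_assoc, hMM]
    simp
  generalize S⁻¹ * X * (Xᵀ * S⁻¹ * X)⁻¹ * Xᵀ * S⁻¹ = Q at *
  have hn := fun j => aux_trace_nonneg hQ (hV j)
  rw [Matrix.sub_mul, Matrix.trace_sub, sub_sub_cancel, abs_of_nonneg (hn i), le_div_iff₀ hi]
  rw [hSum, Matrix.mul_sum, Matrix.trace_sum] at htr
  simp only [Matrix.mul_smul, Matrix.trace_smul, smul_eq_mul] at htr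
  rw [← htr, mul_comm]
  exact Finset.single_le_sum (f := fun j => σ j * (Q * V j).trace)
    (fun j _ => mul_nonneg (hσ j) (hn j)) (Finset.mem_univ i)
end

section
/- Let V₀ = I_n and V₁, …, V_q be n×n positive semidefinite real matrices, let σ₀ > 0 and σ₁, …, σ_q ≥ 0, and set Σ = ∑_{j=0}^{q} σ_j V_j. Let X be an n×p real matrix of full column rank p, and set P = Σ⁻¹ − Σ⁻¹X(X′Σ⁻¹X)⁻¹X′Σ⁻¹. Then for all indices i, j ∈ {0, 1, …, q} with σ_i > 0 and σ_j > 0, |tr(Σ⁻¹V_iΣ⁻¹V_j) − tr(PV_iPV_j)| ≤ 3p/(σ_iσ_j). -/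
open Matrix

lemma aux_tr {n : ℕ} {M N : Matrix (Fin n) (Fin n) ℝ} (hM : M.PosSemidef) (hN : N.PosSemidef) :
    0 ≤ (M * N).trace := by
  obtain ⟨m, A, hA⟩ := Matrix.posSemidef_iff_eq_sum_vecMulVec.mp hM
  rw [hA, Finset.sum_mul, Matrix.trace_sum]
  refine Finset.sum_nonneg fun i _ => ?_
  have h := hN.dotProduct_mulVec_nonneg (A i)
  rw [Matrix.vecMulVec_mul, Matrix.trace_vecMulVec, dotProduct_comm, ← Matrix.dotProduct_mulVec]
  exact h

lemma aux_conj {n : ℕ} {M N : Matrix (Fin n) (Fin n) ℝ} (hM : M.PosSemidef) (hN : Nᵀ = N) :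
    (N * M * N).PosSemidef := by
  have h := hM.conjTranspose_mul_mul_same N
  rwa [conjTranspose_eq_transpose_of_trivial, hN] at h

lemma aux_sym {n : ℕ} {M : Matrix (Fin n) (Fin n) ℝ} (hM : M.PosSemidef) : Mᵀ = M := by
  have h := hM.isHermitian.eq
  rwa [conjTranspose_eq_transpose_of_trivial] at h

lemma aux_le {n : ℕ} {T S a : Matrix (Fin n) (Fin n) ℝ} (hS : S.PosSemidef)
    (hTS : T * S = 1) (hST : S * T = 1) (ha : a.PosSemidef) (hc : (T - a).PosSemidef) :
    (a - a * S * a).PosSemidef := by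
  have e : a - a * S * a = (T - a) * (S * a * S) * (T - a) + a * (S * (T - a) * S) * a := by
    have h1 : ∀ M : Matrix (Fin n) (Fin n) ℝ, T * (S * M) = M := fun M => by
      rw [← mul_assoc, hTS, one_mul]
    have h2 : ∀ M : Matrix (Fin n) (Fin n) ℝ, S * (T * M) = M := fun M => by
      rw [← mul_assoc, hST, one_mul]
    simp only [sub_mul, mul_sub, mul_assoc, h1, h2, hST, mul_one, one_mul]
    abel
  rw [e]
  exact (aux_conj (aux_conj ha (aux_sym hS)) (aux_sym hc)).add
    (aux_conj (aux_conj hc (aux_sym hS)) (aux_sym ha))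

lemma aux_core_s13 {n : ℕ} {T S Q P a b : Matrix (Fin n) (Fin n) ℝ} {p : ℝ}
    (hS : S.PosSemidef) (hQ : Q.PosSemidef) (hP : P.PosSemidef)
    (hTS : T * S = 1) (hST : S * T = 1) (hSPQ : S = P + Q)
    (hQTQ : Q * T * Q = Q) (htr : (Q * T).trace = p)
    (ha : a.PosSemidef) (hca : (T - a).PosSemidef)
    (hb : b.PosSemidef) (hcb : (T - b).PosSemidef) :
    |(S * a * S * b).trace - (P * a * P * b).trace| ≤ 3 * p := by
  have sa := aux_sym ha
  have sb := aux_sym hb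
  have sP := aux_sym hP
  have sQ := aux_sym hQ
  have e0 : (S * a * S * b).trace - (P * a * P * b).trace
      = (P * a * Q * b).trace + (Q * a * P * b).trace + (Q * a * Q * b).trace := by
    rw [hSPQ]; simp only [add_mul, mul_add, trace_add]; ring
  have e1 : (P * a * Q * b).trace = (Q * a * P * b).trace := by
    rw [← trace_transpose (P * a * Q * b)]
    simp only [transpose_mul, sa, sb, sP, sQ]
    rw [trace_mul_comm]; simp only [mul_assoc]
  have e2 : (Q * b * P * a).trace = (Q * a * P * b).trace := by
    rw [← e1, mul_assoc (Q * b), trace_mul_comm]; simp only [mul_assoc]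
  have key : ∀ c : Matrix (Fin n) (Fin n) ℝ, c.PosSemidef → (T - c).PosSemidef →
      (Q * c).trace ≤ p ∧ (Q * c * P * c).trace ≤ (Q * c).trace := by
    intro c hc hcc
    constructor
    · have := aux_tr hQ hcc
      rw [mul_sub, trace_sub, htr] at this; linarith
    · have h : (c - c * P * c).PosSemidef := by
        have := (aux_le hS hTS hST hc hcc).add (aux_conj hQ (aux_sym hc))
        convert this using 1
        rw [hSPQ]; simp only [add_mul, mul_add]; abel
      have := aux_tr hQ h
      rw [mul_sub, trace_sub] at this
      simp only [mul_assoc] at this ⊢; linarith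
  have ka := key a ha hca
  have kb := key b hb hcb
  have h1 := aux_tr hQ (aux_conj hP (N := a - b) (by rw [transpose_sub, sa, sb]))
  have h2 := aux_tr hQ (aux_conj hP (N := a + b) (by rw [transpose_add, sa, sb]))
  have h3 := aux_tr (aux_conj ha sQ) hb
  have h4 := aux_tr (aux_conj ha sQ) hcb
  have e4 : (Q * a * Q * T).trace = (Q * a).trace := by
    rw [mul_assoc, mul_assoc, trace_mul_comm, mul_assoc, trace_mul_comm, hQTQ, trace_mul_comm]
  rw [mul_sub, trace_sub, e4] at h4
  simp only [mul_sub, sub_mul, mul_add, add_mul, trace_sub, trace_add, ← mul_assoc] at h1 h2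
  rw [e0, abs_le]
  constructor <;> linarith

/-- `|tr(Σ⁻¹V_iΣ⁻¹V_j) − tr(PV_iPV_j)| ≤ 3p/(σ_iσ_j)` (Section 5.3). -/
theorem stmt13 {n p q : ℕ}
    (V : Fin (q + 1) → Matrix (Fin n) (Fin n) ℝ)
    (hV0 : V 0 = 1) (hV : ∀ j, (V j).PosSemidef)
    (σ : Fin (q + 1) → ℝ) (hσ0 : 0 < σ 0) (hσ : ∀ j, 0 ≤ σ j)
    (X : Matrix (Fin n) (Fin p) ℝ) (hX : X.rank = p)
    (i j : Fin (q + 1)) (hi : 0 < σ i) (hj : 0 < σ j) :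
    |((SigM V σ)⁻¹ * V i * (SigM V σ)⁻¹ * V j).trace
        - (Pmat V σ X * V i * Pmat V σ X * V j).trace|
      ≤ 3 * (p : ℝ) / (σ i * σ j) := by
  have hsm : ∀ k, (σ k • V k).PosSemidef := fun k => (hV k).smul (hσ k)
  have hsub : ∀ k, (SigM V σ - σ k • V k).PosSemidef := by
    intro k
    have : SigM V σ - σ k • V k = ∑ l ∈ Finset.univ.erase k, σ l • V l := by
      rw [SigM, ← Finset.add_sum_erase _ _ (Finset.mem_univ k), add_sub_cancel_left]
    rw [this]
    exact posSemidef_sum _ fun l _ => hsm l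
  have hT : (SigM V σ).PosDef := by
    have h0 : (σ 0 • V 0).PosDef := by
      rw [hV0]; exact Matrix.PosDef.one.smul hσ0
    have := h0.add_posSemidef (hsub 0)
    rwa [add_sub_cancel] at this
  have hPm : Pmat V σ X = (SigM V σ)⁻¹
      - (SigM V σ)⁻¹ * X * (Xᵀ * (SigM V σ)⁻¹ * X)⁻¹ * Xᵀ * (SigM V σ)⁻¹ := rfl
  have hai := hsm i
  have haj := hsm j
  have hci := hsub i
  have hcj := hsub j
  generalize Pmat V σ X = P at *
  generalize SigM V σ = T at *
  have hS : (T⁻¹).PosDef := hT.inv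
  have hTS : T * T⁻¹ = 1 := mul_nonsing_inv T ((isUnit_iff_isUnit_det T).1 hT.isUnit)
  have hST : T⁻¹ * T = 1 := nonsing_inv_mul T ((isUnit_iff_isUnit_det T).1 hT.isUnit)
  generalize T⁻¹ = S at *
  have hinj : Function.Injective X.mulVec := by
    rw [Matrix.mulVec_injective_iff, linearIndependent_iff_card_eq_finrank_span, Set.finrank,
      ← rank_eq_finrank_span_cols, hX, Fintype.card_fin]
  have hG : (Xᵀ * S * X).PosDef := by
    have := hS.conjTranspose_mul_mul_same hinj
    rwa [conjTranspose_eq_transpose_of_trivial] at this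
  have hGi := hG.inv
  have hGG := mul_nonsing_inv _ ((isUnit_iff_isUnit_det _).1 hG.isUnit)
  have hGG' := nonsing_inv_mul _ ((isUnit_iff_isUnit_det _).1 hG.isUnit)
  generalize (Xᵀ * S * X)⁻¹ = G at *
  have sS := aux_sym hS.posSemidef
  have hQ : (S * X * G * Xᵀ * S).PosSemidef := by
    have := hGi.posSemidef.mul_mul_conjTranspose_same (S * X)
    rw [conjTranspose_eq_transpose_of_trivial, transpose_mul, sS] at this
    simpa only [mul_assoc, Matrix.mul_assoc] using this
  have hQT : S * X * G * Xᵀ * S * T = S * X * G * Xᵀ := by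
    rw [Matrix.mul_assoc _ S T, hST, Matrix.mul_one]
  have hQTQ : S * X * G * Xᵀ * S * T * (S * X * G * Xᵀ * S) = S * X * G * Xᵀ * S := by
    rw [hQT]
    calc S * X * G * Xᵀ * (S * X * G * Xᵀ * S)
        = S * X * (G * (Xᵀ * S * X)) * G * Xᵀ * S := by simp only [Matrix.mul_assoc]
      _ = _ := by rw [hGG', Matrix.mul_one]
  have htr : (S * X * G * Xᵀ * S * T).trace = p := by
    rw [hQT, Matrix.mul_assoc (S * X), trace_mul_comm]
    have : G * Xᵀ * (S * X) = 1 := by rw [← hGG']; simp only [Matrix.mul_assoc]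
    rw [this, trace_one, Fintype.card_fin]
  generalize S * X * G * Xᵀ * S = Q at *
  have hP : P.PosSemidef := by
    have sP : Pᵀ = P := by rw [hPm, transpose_sub, sS, aux_sym hQ]
    have := aux_conj hT.posSemidef sP
    convert this using 1
    have : Q * T * S = Q := by rw [mul_assoc, hTS, mul_one]
    rw [hPm]
    simp only [sub_mul, mul_sub, hST, one_mul, hQTQ, this]
    abel
  have main := aux_core_s13 hS.posSemidef hQ hP hTS hST (by rw [hPm]; abel) hQTQ htr hai hci haj hcj
  simp only [smul_mul_assoc, mul_smul_comm, Matrix.smul_mul, Matrix.mul_smul, trace_smul, smul_eq_mul] at main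
  rw [le_div_iff₀ (mul_pos hi hj), ← abs_of_pos (mul_pos hi hj), ← abs_mul]
  refine le_of_eq_of_le (congrArg _ ?_) main
  ring
end

section
/- Let V₀ = I_n and V₁, …, V_q be n×n positive semidefinite real matrices, let σ₀ > 0 and σ₁, …, σ_q ≥ 0, and set Σ = ∑_{j=0}^{q} σ_j V_j. Let X be an n×p real matrix of full column rank p, and set P = Σ⁻¹ − Σ⁻¹X(X′Σ⁻¹X)⁻¹X′Σ⁻¹. Then for all indices i, j, k ∈ {0, 1, …, q} with σ_i, σ_j, σ_k > 0, |tr(Σ⁻¹V_iΣ⁻¹V_jΣ⁻¹V_k) − tr(PV_iPV_jPV_k)| ≤ 7p/(σ_iσ_jσ_k). -/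
open Matrix

def Ctr {n : ℕ} (A : Matrix (Fin n) (Fin n) ℝ) : Prop := ∀ v, (A *ᵥ v) ⬝ᵥ (A *ᵥ v) ≤ v ⬝ᵥ v

lemma Ctr.mul {n : ℕ} {A B : Matrix (Fin n) (Fin n) ℝ} (hA : Ctr A) (hB : Ctr B) :
    Ctr (A * B) := by
  intro v
  rw [← mulVec_mulVec]
  exact (hA _).trans (hB v)

lemma Ctr.of_psd {n : ℕ} {A : Matrix (Fin n) (Fin n) ℝ} (hA : A.PosSemidef)
    (hA1 : (1 - A).PosSemidef) : Ctr A := by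
  intro v
  have hs : Aᵀ = A := by simpa using hA.1.eq
  have e : 1 - A * A = (1 - A) + (A * (1 - A) * Aᴴ + (1 - A) * A * (1 - A)ᴴ) := by
    rw [hA.1.eq, hA1.1.eq]; noncomm_ring
  have h : (1 - A * A).PosSemidef := by
    rw [e]
    exact hA1.add ((hA1.mul_mul_conjTranspose_same A).add (hA.mul_mul_conjTranspose_same _))
  have h2 := h.dotProduct_mulVec_nonneg v
  have h3 : (A *ᵥ v) ⬝ᵥ (A *ᵥ v) = v ⬝ᵥ ((A * A) *ᵥ v) := by
    rw [← mulVec_mulVec, dotProduct_mulVec v A, ← mulVec_transpose, hs]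
  simp only [star_trivial, sub_mulVec, one_mulVec, dotProduct_sub] at h2
  linarith

lemma Ctr.abs_le {n : ℕ} {A : Matrix (Fin n) (Fin n) ℝ} (hA : Ctr A) (v : Fin n → ℝ) :
    |v ⬝ᵥ (A *ᵥ v)| ≤ v ⬝ᵥ v := by
  have h := hA v
  have c := dotProduct_comm v (A *ᵥ v)
  have nn : ∀ w : Fin n → ℝ, 0 ≤ w ⬝ᵥ w := fun w =>
    Finset.sum_nonneg fun i _ => mul_self_nonneg _
  have h1 := nn (v + A *ᵥ v)
  have h2 := nn (v - A *ᵥ v)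
  simp only [dotProduct_add, add_dotProduct, dotProduct_sub, sub_dotProduct] at h1 h2
  rw [_root_.abs_le]
  constructor <;> linarith

lemma Ctr.trace_le {n : ℕ} {N Q : Matrix (Fin n) (Fin n) ℝ} (hN : Ctr N)
    (hQt : Qᵀ = Q) (hQ : Q * Q = Q) : |(Q * N).trace| ≤ Q.trace := by
  have e : ∀ M : Matrix (Fin n) (Fin n) ℝ,
      (Q * M).trace = ∑ a, (Q.col a) ⬝ᵥ (M *ᵥ (Q.col a)) := by
    intro M
    have : (Q * M).trace = (Qᵀ * (M * Q)).trace := by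
      rw [hQt]; conv_lhs => rw [← hQ, Matrix.mul_assoc, trace_mul_comm, Matrix.mul_assoc, trace_mul_comm, Matrix.mul_assoc, trace_mul_comm]
      rw [Matrix.mul_assoc, trace_mul_comm, Matrix.mul_assoc]
    rw [this]
    rfl
  have e1 := e 1
  rw [Matrix.mul_one] at e1
  rw [e N, e1]
  refine (Finset.abs_sum_le_sum_abs _ _).trans (Finset.sum_le_sum fun a _ => ?_)
  simpa using hN.abs_le (Q.col a)

open scoped MatrixOrder Matrix.Norms.L2Operator in
lemma psd_factor {n : ℕ} {A : Matrix (Fin n) (Fin n) ℝ} (hA : A.PosSemidef) :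
    ∃ B : Matrix (Fin n) (Fin n) ℝ, A = Bᵀ * B := by
  obtain ⟨B, hB⟩ := CStarAlgebra.nonneg_iff_eq_star_mul_self.mp hA.nonneg
  exact ⟨B, by simpa [star_eq_conjTranspose] using hB⟩

theorem core {n : ℕ} {A B C Q : Matrix (Fin n) (Fin n) ℝ} (hA : Ctr A) (hB : Ctr B)
    (hC : Ctr C) (hQt : Qᵀ = Q) (hQ : Q * Q = Q) :
    |(A * B * C).trace - ((1 - Q) * A * (1 - Q) * B * (1 - Q) * C).trace| ≤ 3 * Q.trace := by
  have hQp : Q.PosSemidef := by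
    have := posSemidef_conjTranspose_mul_self Q
    rwa [conjTranspose_eq_transpose_of_trivial, hQt, hQ] at this
  have hMp : (1 - Q).PosSemidef := by
    have := posSemidef_conjTranspose_mul_self (1 - Q)
    rw [conjTranspose_eq_transpose_of_trivial, transpose_sub, hQt, transpose_one] at this
    convert this using 1
    simp [Matrix.mul_sub, Matrix.sub_mul, hQ]
  have hM : Ctr (1 - Q) := by
    refine Ctr.of_psd hMp ?_
    simpa using hQp
  set M := 1 - Q with hMdef
  have e : (A * B * C).trace - (M * A * M * B * M * C).trace
      = (Q * (A * B * C)).trace + (Q * (B * C * M * A)).trace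
        + (Q * (C * M * A * M * B)).trace := by
    have e2 : (Q * (B * C * M * A)).trace = (M * A * Q * B * C).trace := by
      rw [show Q * (B * C * M * A) = (Q * B * C) * (M * A) by noncomm_ring, trace_mul_comm]
      congr 1; noncomm_ring
    have e3 : (Q * (C * M * A * M * B)).trace = (M * A * M * B * Q * C).trace := by
      rw [show Q * (C * M * A * M * B) = (Q * C) * (M * A * M * B) by noncomm_ring,
        trace_mul_comm]
      congr 1; noncomm_ring
    rw [e2, e3, ← trace_sub, ← trace_add, ← trace_add]
    congr 1
    have : Q = 1 - M := by simp [hMdef]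
    rw [this]; noncomm_ring
  have h1 := ((hA.mul hB).mul hC).trace_le hQt hQ
  have h2 := (((hB.mul hC).mul hM).mul hA).trace_le hQt hQ
  have h3 := ((((hC.mul hM).mul hA).mul hM).mul hB).trace_le hQt hQ
  rw [e]
  refine (abs_add_le _ _).trans ?_
  have := abs_add_le (Q * (A * B * C)).trace (Q * (B * C * M * A)).trace
  linarith

theorem stmt14 {n p q : ℕ}
    (V : Fin (q + 1) → Matrix (Fin n) (Fin n) ℝ)
    (hV0 : V 0 = 1) (hV : ∀ j, (V j).PosSemidef)
    (σ : Fin (q + 1) → ℝ) (hσ0 : 0 < σ 0) (hσ : ∀ j, 0 ≤ σ j)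
    (X : Matrix (Fin n) (Fin p) ℝ) (hX : X.rank = p)
    (i j k : Fin (q + 1)) (hi : 0 < σ i) (hj : 0 < σ j) (hk : 0 < σ k) :
    |((SigM V σ)⁻¹ * V i * (SigM V σ)⁻¹ * V j * (SigM V σ)⁻¹ * V k).trace
        - (Pmat V σ X * V i * Pmat V σ X * V j * Pmat V σ X * V k).trace|
      ≤ 7 * (p : ℝ) / (σ i * σ j * σ k) := by
  have hS : (SigM V σ).PosDef := by
    unfold SigM
    rw [← Finset.add_sum_erase _ _ (Finset.mem_univ (0 : Fin (q+1)))]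
    refine PosDef.add_posSemidef ?_ (posSemidef_sum _ fun l _ => (hV l).smul (hσ l))
    rw [hV0]
    exact PosDef.one.smul hσ0
  have hSi := hS.inv
  have hXinj : Function.Injective X.mulVec := by
    rw [mulVec_injective_iff, linearIndependent_iff_card_eq_finrank_span]
    rw [Set.finrank, ← rank_eq_finrank_span_cols, hX, Fintype.card_fin]
  have hG : (Xᵀ * (SigM V σ)⁻¹ * X).PosDef := by
    simpa using hSi.conjTranspose_mul_mul_same hXinj
  obtain ⟨B, hB⟩ : ∃ B : Matrix (Fin n) (Fin n) ℝ, (SigM V σ)⁻¹ = Bᵀ * B := by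
    obtain ⟨B, hB⟩ := psd_factor hSi.posSemidef
    exact ⟨B, hB⟩
  have hBS : B * SigM V σ * Bᵀ = 1 := by
    have : (SigM V σ)⁻¹ * SigM V σ = 1 :=
      nonsing_inv_mul _ ((isUnit_iff_isUnit_det _).mp hS.isUnit)
    rw [hB, Matrix.mul_assoc] at this
    exact mul_eq_one_comm.mp this
  set G := (Xᵀ * (SigM V σ)⁻¹ * X)⁻¹ with hGdef
  have hGm : G * (Xᵀ * (Bᵀ * B) * X) = 1 := by
    rw [← hB]
    exact nonsing_inv_mul _ ((isUnit_iff_isUnit_det _).mp hG.isUnit)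
  have hGt : Gᵀ = G := by simpa using hG.inv.1.eq
  let Q := B * X * G * Xᵀ * Bᵀ
  have hQt : Qᵀ = Q := by simp [Q, transpose_mul, hGt, Matrix.mul_assoc]
  have hQ : Q * Q = Q := by
    have : Q * Q = B * X * (G * (Xᵀ * (Bᵀ * B) * X)) * G * Xᵀ * Bᵀ := by
      simp only [Q, Matrix.mul_assoc]
    rw [this, hGm, Matrix.mul_one]
  have hQtr : Q.trace = p := by
    have : Q = (B * X) * (G * Xᵀ * Bᵀ) := by simp only [Q, Matrix.mul_assoc]
    rw [this, trace_mul_comm,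
      show (G * Xᵀ * Bᵀ) * (B * X) = G * (Xᵀ * (Bᵀ * B) * X) by simp only [Matrix.mul_assoc],
      hGm]
    simp
  have hP : Pmat V σ X = Bᵀ * (1 - Q) * B := by
    unfold Pmat
    rw [← hGdef, hB]
    simp only [Q, Matrix.mul_sub, Matrix.sub_mul, Matrix.mul_assoc, Matrix.one_mul]
  let A : Fin (q+1) → Matrix (Fin n) (Fin n) ℝ := fun l => B * (σ l • V l) * Bᵀ
  have hAp : ∀ l, (A l).PosSemidef := fun l => by
    simpa [A] using ((hV l).smul (hσ l)).mul_mul_conjTranspose_same B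
  have hAs : ∑ l, A l = 1 := by
    rw [← hBS, SigM, Finset.mul_sum, Finset.sum_mul]
  have hA : ∀ l, Ctr (A l) := fun l => by
    refine Ctr.of_psd (hAp l) ?_
    rw [← hAs, ← Finset.add_sum_erase _ _ (Finset.mem_univ l), add_sub_cancel_left]
    exact posSemidef_sum _ fun l _ => hAp l
  have key := core (hA i) (hA j) (hA k) hQt hQ
  have gen : ∀ M : Matrix (Fin n) (Fin n) ℝ,
      (M * A i * M * A j * M * A k).trace = (σ i * σ j * σ k) *
        ((Bᵀ * M * B) * V i * (Bᵀ * M * B) * V j * (Bᵀ * M * B) * V k).trace := by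
    intro M
    have : M * A i * M * A j * M * A k = (σ i * σ j * σ k) •
        ((M * B * V i * (Bᵀ * M * B) * V j * (Bᵀ * M * B) * V k) * Bᵀ) := by
      simp only [A, Matrix.mul_smul, Matrix.smul_mul, smul_smul, Matrix.mul_assoc]
      congr 1; ring
    rw [this, trace_smul, trace_mul_comm, smul_eq_mul]
    simp only [Matrix.mul_assoc]
  have g1 := gen 1
  have g2 := gen (1 - Q)
  simp only [Matrix.one_mul, Matrix.mul_one] at g1
  rw [g1, g2, ← hP, ← hB, hQtr, ← mul_sub, abs_mul] at key
  have hpos : 0 < σ i * σ j * σ k := by positivity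
  rw [abs_of_pos hpos] at key
  rw [le_div_iff₀ hpos]
  have : (0:ℝ) ≤ p := Nat.cast_nonneg p
  linarith
end

section
/- For i = 1, …, t let n_i be a positive integer, λ_i > 0 a real number, and x_{ij} ∈ ℝ^{p−1} for j = 1, …, n_i. Set A = ∑_{i=1}^{t} n_i/λ_i (a scalar), B = ∑_{i=1}^{t} (1/λ_i) ∑_{j=1}^{n_i} x_{ij} (a vector in ℝ^{p−1}), C = ∑_{i=1}^{t} (1/λ_i) ∑_{j=1}^{n_i} x_{ij}x_{ij}′ (a (p−1)×(p−1) matrix), S₂ = ∑_{i=1}^{t} ∑_{j=1}^{n_i} ∑_{k=1}^{t} ∑_{l=1}^{n_k} (x_{ij} − x_{kl})(x_{ij} − x_{kl})′, and λ_M = max_{1 ≤ i ≤ t} λ_i. Then AC − BB′ ⪰ S₂/(2λ_M²), i.e., the matrix AC − BB′ − S₂/(2λ_M²) is positive semidefinite. -/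
open Matrix

theorem aux_scalar_s15 {ι : Type*} [Fintype ι] (w u v : ι → ℝ) :
    (∑ a, w a) * (∑ a, w a * (u a * v a)) - (∑ a, w a * u a) * (∑ a, w a * v a)
      = ∑ a, ∑ b, (w a * w b / 2) * ((u a - u b) * (v a - v b)) := by
  have h : ∀ a b, (w a * w b / 2) * ((u a - u b) * (v a - v b))
      = 2⁻¹ * ((w a * (u a * v a)) * w b + w a * (w b * (u b * v b))
        - (w a * u a) * (w b * v b) - (w a * v a) * (w b * u b)) := by
    intro a b; ring
  simp_rw [h, ← Finset.mul_sum, Finset.sum_sub_distrib, Finset.sum_add_distrib,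
    ← Finset.mul_sum, ← Finset.sum_mul]
  ring

theorem aux_psd {ι : Type*} [Fintype ι] {d : ℕ} (w : ι → ℝ) (x : ι → Fin d → ℝ) (c : ℝ)
    (hc : ∀ a b, c ≤ w a * w b / 2) :
    Matrix.PosSemidef ((∑ a, w a) • (∑ a, w a • vecMulVec (x a) (x a))
      - vecMulVec (∑ a, w a • x a) (∑ a, w a • x a)
      - c • ∑ a, ∑ b, vecMulVec (x a - x b) (x a - x b)) := by
  have key : ((∑ a, w a) • (∑ a, w a • vecMulVec (x a) (x a))
      - vecMulVec (∑ a, w a • x a) (∑ a, w a • x a)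
      - c • ∑ a, ∑ b, vecMulVec (x a - x b) (x a - x b))
      = ∑ a, ∑ b, (w a * w b / 2 - c) • vecMulVec (x a - x b) (x a - x b) := by
    ext p q
    have h := aux_scalar_s15 w (fun a => x a p) (fun a => x a q)
    simp only [Matrix.sub_apply, Matrix.smul_apply, Matrix.sum_apply, vecMulVec_apply,
      Finset.sum_apply, Pi.smul_apply, Pi.sub_apply, smul_eq_mul]
    rw [h]
    simp only [Finset.mul_sum, ← Finset.sum_sub_distrib]
    refine Finset.sum_congr rfl fun a _ => Finset.sum_congr rfl fun b _ => ?_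
    ring
  rw [key]
  refine Matrix.posSemidef_sum _ fun a _ => Matrix.posSemidef_sum _ fun b _ => ?_
  refine Matrix.PosSemidef.smul ?_ (sub_nonneg.2 (hc a b))
  simpa using Matrix.posSemidef_vecMulVec_self_star (x a - x b)

/-- Section 5.7: with `A = ∑ n_i/λ_i`, `B = ∑ λ_i⁻¹ ∑_j x_{ij}`,
`C = ∑ λ_i⁻¹ ∑_j x_{ij}x_{ij}′`,
`S₂ = ∑_{i,j,k,l} (x_{ij} − x_{kl})(x_{ij} − x_{kl})′` and `λ_M = max_i λ_i`, one has
`AC − BB′ ⪰ S₂/(2λ_M²)` in the Loewner order. -/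
theorem stmt15 {t d : ℕ} (ht : 0 < t) (n : Fin t → ℕ) (hn : ∀ i, 0 < n i)
    (lam : Fin t → ℝ) (hlam : ∀ i, 0 < lam i)
    (x : (i : Fin t) → Fin (n i) → (Fin d → ℝ)) :
    Matrix.PosSemidef
      ((∑ i, (n i : ℝ) / lam i) • (∑ i, (lam i)⁻¹ • ∑ j, vecMulVec (x i j) (x i j))
        - vecMulVec (∑ i, (lam i)⁻¹ • ∑ j, x i j) (∑ i, (lam i)⁻¹ • ∑ j, x i j)
        - (2 * (Finset.univ.sup' ⟨⟨0, ht⟩, Finset.mem_univ _⟩ lam) ^ 2)⁻¹ •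
            ∑ i, ∑ j, ∑ k, ∑ l, vecMulVec (x i j - x k l) (x i j - x k l)) := by
  set M := Finset.univ.sup' ⟨⟨0, ht⟩, Finset.mem_univ _⟩ lam with hM
  have hle : ∀ i, lam i ≤ M := fun i => Finset.le_sup' lam (Finset.mem_univ i)
  have hMpos : 0 < M := lt_of_lt_of_le (hlam ⟨0, ht⟩) (hle _)
  have h := aux_psd (ι := Σ i, Fin (n i)) (fun a => (lam a.1)⁻¹) (fun a => x a.1 a.2)
    ((2 * M ^ 2)⁻¹) (by
      intro a b
      have h1 := inv_anti₀ (hlam a.1) (hle a.1)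
      have h2 := inv_anti₀ (hlam b.1) (hle b.1)
      have h3 : M⁻¹ * M⁻¹ ≤ (lam a.1)⁻¹ * (lam b.1)⁻¹ :=
        mul_le_mul h1 h2 (inv_pos.2 hMpos).le (inv_pos.2 (hlam a.1)).le
      have h4 : (2 * M ^ 2)⁻¹ = M⁻¹ * M⁻¹ / 2 := by field_simp
      rw [h4]
      linarith)
  simp only [Fintype.sum_sigma] at h
  simpa [Finset.smul_sum, div_eq_mul_inv] using h
end

section
/- Fix w ≥ 1 and positive integers n₁, …, n_{w+1}; let S_{w+1} = {0,1}^{w+1}, n = ∏_{l=1}^{w+1} n_l, and for i ∈ S_{w+1} let Z_i = ⊗_{l=1}^{w+1} 1_{n_l}^{i_l} (where 1_n^1 is the n-vector of ones and 1_n^0 = I_n), K_i = ⊗_{l=1}^{w+1} J_{n_l}^{i_l} (where J_n^1 = J_n is the all-ones matrix and J_n^0 = I_n), and r_i = ∏_{l : i_l = 0} n_l. Let s ∈ S_{w+1} with s_{w+1} = 1, put X = Z_s and p = r_s, let S ⊆ S_{w+1}, σ₀ > 0, σ_k ≥ 0 for k ∈ S, and Σ = σ₀I_n + ∑_{k∈S}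 σ_k K_k; write Σ⁻¹ = ∑_{k∈S_{w+1}} τ_k K_k for the (unique) coefficients τ_k of the inverse in this Kronecker basis. Then, for each i ∈ S and each y ∈ ℝⁿ, the i-th BLUP block ṽ_i = σ_i Z_i′ (Σ⁻¹ − Σ⁻¹X(X′Σ⁻¹X)⁻¹X′Σ⁻¹) y satisfies ṽ_i = ∑_{k ∈ S_{w+1}} σ_i τ_k W_{i,k} y, where W_{i,k} = Z_i′(I_n − (p/n)XX′)K_k. -/
open Matrix

/-- The design matrix `Z_i = ⊗_l 1_{n_l}^{i_l}`, realized as a matrix whose columns are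
indexed by the factors `l` with `i_l = 0` (a factor with `i_l = 1` contributes a single
column of ones, encoded by `Fin 1`). -/
noncomputable def Zmat (w : ℕ) (n : Fin (w + 1) → ℕ) (i : Fin (w + 1) → Bool) :
    Matrix ((l : Fin (w + 1)) → Fin (n l))
      ((l : Fin (w + 1)) → Fin (if i l then 1 else n l)) ℝ :=
  Matrix.of fun a b => ∏ l, if i l then (1 : ℝ) else (if (a l : ℕ) = (b l : ℕ) then 1 else 0)

lemma aux_ZZt (b : Bool) (m : ℕ) (x y : Fin m) :
    ∑ c : Fin (if b then 1 else m),
      ((if b then (1 : ℝ) else (if (x : ℕ) = (c : ℕ) then 1 else 0)) *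
       (if b then (1 : ℝ) else (if (y : ℕ) = (c : ℕ) then 1 else 0)))
      = if b then (1 : ℝ) else (if x = y then 1 else 0) := by
  cases b
  · simp only [Bool.false_eq_true, if_false, ← Fin.ext_iff]
    simp [Finset.sum_ite_eq]
  · simp

lemma aux_ZtZ (b : Bool) (m : ℕ) (x y : Fin (if b then 1 else m)) :
    ∑ c : Fin m,
      ((if b then (1 : ℝ) else (if (c : ℕ) = (x : ℕ) then 1 else 0)) *
       (if b then (1 : ℝ) else (if (c : ℕ) = (y : ℕ) then 1 else 0)))
      = (if b then (m : ℝ) else 1) * (if x = y then 1 else 0) := by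
  cases b
  · change Fin m at x y
    change ∑ c : Fin m, ((if (c : ℕ) = (x : ℕ) then (1:ℝ) else 0) *
      (if (c : ℕ) = (y : ℕ) then 1 else 0)) = 1 * (if x = y then 1 else 0)
    simp [← Fin.ext_iff, eq_comm]
  · have : x = y := Subsingleton.elim (α := Fin 1) x y
    simp [this]

lemma aux_KK (b d : Bool) (m : ℕ) (x y : Fin m) :
    ∑ c : Fin m,
      ((if b then (1 : ℝ) else (if x = c then 1 else 0)) *
       (if d then (1 : ℝ) else (if c = y then 1 else 0)))
      = ∑ c : Fin m,
      ((if d then (1 : ℝ) else (if x = c then 1 else 0)) *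
       (if b then (1 : ℝ) else (if c = y then 1 else 0))) := by
  cases b <;> cases d <;> simp

lemma Z_mul_Zt (w : ℕ) (n : Fin (w + 1) → ℕ) (i : Fin (w + 1) → Bool) :
    Zmat w n i * (Zmat w n i)ᵀ = Kmat w n i := by
  ext a b
  simp only [Matrix.mul_apply, Zmat, Kmat, Matrix.transpose_apply, Matrix.of_apply,
    ← Finset.prod_mul_distrib]
  rw [← Fintype.prod_sum (fun l (c : Fin (if i l then 1 else n l)) =>
      ((if i l then (1 : ℝ) else (if (a l : ℕ) = (c : ℕ) then 1 else 0)) *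
       (if i l then (1 : ℝ) else (if (b l : ℕ) = (c : ℕ) then 1 else 0))))]
  exact Finset.prod_congr rfl fun l _ => aux_ZZt _ _ _ _

lemma Zt_mul_Z (w : ℕ) (n : Fin (w + 1) → ℕ) (i : Fin (w + 1) → Bool) :
    (Zmat w n i)ᵀ * Zmat w n i = (∏ l, if i l then (n l : ℝ) else 1) • 1 := by
  ext a b
  simp only [Matrix.mul_apply, Zmat, Matrix.transpose_apply, Matrix.of_apply,
    ← Finset.prod_mul_distrib, Matrix.smul_apply, smul_eq_mul]
  rw [← Fintype.prod_sum (fun l (c : Fin (n l)) =>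
      ((if i l then (1 : ℝ) else (if (c : ℕ) = (a l : ℕ) then 1 else 0)) *
       (if i l then (1 : ℝ) else (if (c : ℕ) = (b l : ℕ) then 1 else 0))))]
  rw [Finset.prod_congr rfl fun l _ => aux_ZtZ (i l) (n l) (a l) (b l), Finset.prod_mul_distrib]
  congr 1
  rw [Matrix.one_apply, Fintype.prod_boole]
  simp [funext_iff]

lemma K_comm (w : ℕ) (n : Fin (w + 1) → ℕ) (i j : Fin (w + 1) → Bool) :
    Kmat w n i * Kmat w n j = Kmat w n j * Kmat w n i := by
  ext a b
  simp only [Matrix.mul_apply, Kmat, Matrix.of_apply, ← Finset.prod_mul_distrib]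
  rw [← Fintype.prod_sum (fun l (c : Fin (n l)) =>
      ((if i l then (1 : ℝ) else (if a l = c then 1 else 0)) *
       (if j l then (1 : ℝ) else (if c = b l then 1 else 0)))),
    ← Fintype.prod_sum (fun l (c : Fin (n l)) =>
      ((if j l then (1 : ℝ) else (if a l = c then 1 else 0)) *
       (if i l then (1 : ℝ) else (if c = b l then 1 else 0))))]
  exact Finset.prod_congr rfl fun l _ => aux_KK _ _ _ _ _

lemma K_psd (w : ℕ) (n : Fin (w + 1) → ℕ) (i : Fin (w + 1) → Bool) :
    (Kmat w n i).PosSemidef := by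
  rw [← Z_mul_Zt]
  have := Matrix.posSemidef_self_mul_conjTranspose (Zmat w n i)
  rwa [Matrix.conjTranspose_eq_transpose_of_trivial] at this

lemma proj_core {α β : Type*} [Fintype α] [Fintype β] [DecidableEq α] [DecidableEq β]
    (G A : Matrix α α ℝ) (X : Matrix α β ℝ) (c : ℝ) (hc : c ≠ 0)
    (hAG : A * G = 1) (hXX : Xᵀ * X = c • 1) (hcomm : A * (X * Xᵀ) = (X * Xᵀ) * A) :
    A * X * (Xᵀ * A * X)⁻¹ * Xᵀ * A = c⁻¹ • (X * Xᵀ * A) := by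
  have h1 : A * X = c⁻¹ • (X * (Xᵀ * A * X)) := by
    have : X * (Xᵀ * A * X) = c • (A * X) := by
      calc X * (Xᵀ * A * X) = (X * Xᵀ * A) * X := by simp only [Matrix.mul_assoc]
        _ = A * X * (Xᵀ * X) := by rw [← hcomm]; simp only [Matrix.mul_assoc]
        _ = _ := by rw [hXX]; simp
    rw [this, smul_smul, inv_mul_cancel₀ hc, one_smul]
  have h2 : (Xᵀ * A * X) * ((c⁻¹ * c⁻¹) • (Xᵀ * G * X)) = 1 := by
    have : (Xᵀ * A * X) * (Xᵀ * G * X) = (c * c) • 1 := by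
      calc (Xᵀ * A * X) * (Xᵀ * G * X) = Xᵀ * (A * (X * Xᵀ)) * (G * X) := by
            simp only [Matrix.mul_assoc]
        _ = (Xᵀ * X) * (Xᵀ * ((A * G) * X)) := by rw [hcomm]; simp only [Matrix.mul_assoc]
        _ = _ := by rw [hAG, Matrix.one_mul, hXX]; simp [smul_smul]
    rw [Matrix.mul_smul, this, smul_smul]
    have : c⁻¹ * c⁻¹ * (c * c) = 1 := by field_simp
    rw [this, one_smul]
  have h3 : IsUnit (Xᵀ * A * X).det := by
    exact Matrix.isUnit_det_of_right_inverse h2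
  rw [h1, Matrix.smul_mul, Matrix.mul_assoc X, Matrix.mul_nonsing_inv _ h3]
  simp

/-- Representation of the BLUP of the random effects in a balanced mixed ANOVA model
(Section 5.5): with `X = Z_s`, `p = r_s`, `Σ = σ₀I + ∑_{k∈S} σ_k K_k`,
`Σ⁻¹ = ∑_k τ_k K_k` and `P = Σ⁻¹ − Σ⁻¹X(X′Σ⁻¹X)⁻¹X′Σ⁻¹`, the BLUP block
`ṽ_i = σ_i Z_i′ P y` equals `∑_{k ∈ S_{w+1}} σ_i τ_k W_{i,k} y`, where
`W_{i,k} = Z_i′(I − (p/n)XX′)K_k`. -/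
theorem stmt18 (w : ℕ) (hw : 1 ≤ w) (n : Fin (w + 1) → ℕ) (hn : ∀ l, 0 < n l)
    (s : Fin (w + 1) → Bool) (hs : s (Fin.last w) = true)
    (S : Finset (Fin (w + 1) → Bool))
    (σ₀ : ℝ) (hσ₀ : 0 < σ₀)
    (σ : (Fin (w + 1) → Bool) → ℝ) (hσ : ∀ k ∈ S, 0 ≤ σ k)
    (Sig : Matrix ((l : Fin (w + 1)) → Fin (n l)) ((l : Fin (w + 1)) → Fin (n l)) ℝ)
    (hSig : Sig = σ₀ • (1 : Matrix _ _ ℝ) + ∑ k ∈ S, σ k • Kmat w n k)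
    (τ : (Fin (w + 1) → Bool) → ℝ)
    (hτ : Sig⁻¹ = ∑ k : Fin (w + 1) → Bool, τ k • Kmat w n k)
    (i : Fin (w + 1) → Bool) (hi : i ∈ S)
    (y : ((l : Fin (w + 1)) → Fin (n l)) → ℝ) :
    σ i • (((Zmat w n i)ᵀ *
        (Sig⁻¹ - Sig⁻¹ * (Zmat w n s) *
          ((Zmat w n s)ᵀ * Sig⁻¹ * (Zmat w n s))⁻¹ * (Zmat w n s)ᵀ * Sig⁻¹)) *ᵥ y)
      = ∑ k : Fin (w + 1) → Bool,
          (σ i * τ k) •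
            (((Zmat w n i)ᵀ *
              ((1 : Matrix _ _ ℝ) -
                ((rprod w n s : ℝ) / (Ntot w n : ℝ)) • (Zmat w n s * (Zmat w n s)ᵀ)) *
              Kmat w n k) *ᵥ y) := by
  have hpd : Sig.PosDef := by
    rw [hSig]
    refine Matrix.PosDef.add_posSemidef (Matrix.PosDef.one.smul hσ₀) ?_
    exact Matrix.posSemidef_sum _ fun k hk => (K_psd w n k).smul (hσ k hk)
  have hu : IsUnit Sig.det := hpd.det_pos.ne'.isUnit
  have hAG : Sig⁻¹ * Sig = 1 := Matrix.nonsing_inv_mul _ hu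
  have hc : (∏ l, if s l then (n l : ℝ) else 1) ≠ 0 := by
    refine Finset.prod_ne_zero_iff.2 fun l _ => ?_
    have := (hn l).ne'
    split_ifs <;> simp [this]
  have hcomm : Sig⁻¹ * (Zmat w n s * (Zmat w n s)ᵀ) = (Zmat w n s * (Zmat w n s)ᵀ) * Sig⁻¹ := by
    rw [hτ, Z_mul_Zt, Finset.sum_mul, Finset.mul_sum]
    refine Finset.sum_congr rfl fun k _ => ?_
    rw [Matrix.smul_mul, Matrix.mul_smul, K_comm]
  have hcv : ((rprod w n s : ℝ) / (Ntot w n : ℝ)) = (∏ l, if s l then (n l : ℝ) else 1)⁻¹ := by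
    have hN : (Ntot w n : ℝ) = (∏ l, if s l then (n l : ℝ) else 1) * (rprod w n s : ℝ) := by
      rw [Ntot, rprod, Finset.prod_filter]
      push_cast
      rw [← Finset.prod_mul_distrib]
      refine Finset.prod_congr rfl fun l _ => ?_
      cases s l <;> simp
    have hr : (rprod w n s : ℝ) ≠ 0 := by
      rw [rprod]
      exact_mod_cast Finset.prod_ne_zero_iff.2 fun l _ => (hn l).ne'
    rw [hN]
    field_simp
  have key := proj_core Sig Sig⁻¹ (Zmat w n s) _ hc hAG (Zt_mul_Z w n s) hcomm
  rw [key, hcv]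
  set c := (∏ l, if s l then (n l : ℝ) else 1)
  have e : Sig⁻¹ - c⁻¹ • (Zmat w n s * (Zmat w n s)ᵀ * Sig⁻¹)
      = (1 - c⁻¹ • (Zmat w n s * (Zmat w n s)ᵀ)) * Sig⁻¹ := by
    rw [Matrix.sub_mul, Matrix.one_mul, Matrix.smul_mul]
  rw [e, ← Matrix.mul_assoc, hτ, Matrix.mul_sum, Matrix.sum_mulVec, Finset.smul_sum]
  refine Finset.sum_congr rfl fun k _ => ?_
  rw [Matrix.mul_smul, Matrix.smul_mulVec, smul_smul]
end
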